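/- arXiv:1701.07101 — 2 statements merged into one kernel-verified Lean document; each statement's English description precedes it below -/
import Mathlib

section
/- Let ᵈ = ((d_1^-, d_1^+), …, (d_n^-, d_n^+)) be a digraphical directed degree sequence which is switch-irreducible, such that r_min ≥ 1 and 2 ≤ r_max ≤ (1/4)·√m. Then the mixing time τ(M(ᵈ), ε) of the directed switch chain M(ᵈ) on Ω(ᵈ) satisfies τ(M(ᵈ), ε) ≤ (1/4) · r_max^{16} · m^{11} · ( m·log(m) + log(ε^{-1}) ). -/
/-!
The bound follows from a Poincaré inequality for the switch graph on `Ω`: for every function `f`,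
`∑ (f X - f Y)² ≤ 27 (n² + 1) m⁷ |Ω| · ∑_{X ~ Y switch} (f X - f Y)²` (`omega_poincare`). Together
with the transition probabilities, which equal `1 / C(m,2)` on switches, it bounds the second
largest eigenvalue away from `1` by at least `1 / (27 m¹¹)`. Since two arcs `(u,v)`, `(v,w)` are
never switched, each digraph has holding probability at least `1 / C(m,2)`, which keeps the
eigenvalues away from `-1`. As `|Ω| ≤ m^(2 * m)` and `r ≥ 2` gives `r¹⁶ / 4 ≥ 27`, the usual `ℓ²` bound
on the total variation distance (`mixing_le`) concludes.

The Poincaré inequality is proved with pairings: vertex `u` carries `dp u` out-points and `dm u`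
in-points, and a bijection between out-points and in-points projects to a digraph. Each simple
digraph is the projection of the same number of pairings (`card_fib`), and exchanging the partners
of two out-points projects to a switch or to the identity (`arcs_or_switch`).

Simple pairings are encoded as perfect matchings of a bipartite graph `gadj` having two nodes for
every potential arc, matched to each other when the arc is absent and otherwise passed through by
the pair forming that arc. For perfect matchings of a bipartite graph the Jerrum–Sinclair canonical
paths apply: the cycles of the symmetric difference of `σ` and `σ'` are unwound one after the other
through near-perfect matchings, and the pair `(σ, σ')` is recovered from one slide of its path and
a complementary near-perfect matching (`SortInv.decode`, `matching_poincare`). The number of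
near-perfect matchings is at most polynomially larger than that of simple pairings
(`card_near_gadget`, `card_near_le`).

A function on digraphs extends to near-perfect matchings by repairing the corresponding near-simple
pairing with one exchange (`repairVal`). Because `m ≥ 16 r²`, most out-points can be exchanged with
the defective one without creating a loop or a repeated arc, so two repairs of pairings differing
by a slide are joined through a common generic out-point by a bounded number of exchanges between
simple pairings (`exists_gen`, `slide_le`). Hence the variation of the extended function along the
canonical paths is controlled by exchanges of simple pairings, which gives `pairing_poincare`.
-/

open scoped Classical

noncomputable section

namespace DirectedSwitchChain

variable {n : ℕ}

/-- `Omega dm dp` is the set of simple directed graphs on `[n] = Fin n` (arc sets,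
with no loops) in which vertex `j` has in-degree `dm j` and out-degree `dp j`. -/
def Omega (dm dp : Fin n → ℕ) : Set (Set (Fin n × Fin n)) :=
  {A | (∀ a ∈ A, a.1 ≠ a.2) ∧
       (∀ j, {w | (j, w) ∈ A}.ncard = dp j) ∧
       (∀ j, {w | (w, j) ∈ A}.ncard = dm j)}

/-- `m`: the number of arcs. -/
def numArcs (dm : Fin n → ℕ) : ℕ := ∑ j, dm j

/-- The maximum semi-degree. -/
def rmax (dm dp : Fin n → ℕ) : ℕ := Finset.univ.sup fun j => max (dm j) (dp j)

/-- `A'` is obtained from `A` by a single directed switch. -/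
def DSwitch (A A' : Set (Fin n × Fin n)) : Prop :=
  ∃ i j k l : Fin n,
    i ≠ j ∧ i ≠ k ∧ i ≠ l ∧ j ≠ k ∧ j ≠ l ∧ k ≠ l ∧
    (i, j) ∈ A ∧ (k, l) ∈ A ∧ (i, l) ∉ A ∧ (k, j) ∉ A ∧
    A' = (A \ {(i, j), (k, l)}) ∪ {(i, l), (k, j)}

/-- `(dm, dp)` is switch-irreducible: the directed switch chain is irreducible, i.e.
any element of `Omega dm dp` can be transformed into any other by a finite sequence
of switches. -/
def SwitchIrreducible (dm dp : Fin n → ℕ) : Prop :=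
  ∀ A ∈ Omega dm dp, ∀ A' ∈ Omega dm dp, Relation.ReflTransGen DSwitch A A'

/-- The number of unordered pairs of distinct arcs of `A`. -/
def arcPairCount (A : Set (Fin n × Fin n)) : ℕ :=
  {S : Set (Fin n × Fin n) | S ⊆ A ∧ S.ncard = 2}.ncard

/-- The number of unordered pairs `{(i,j), (k,l)}` of distinct arcs of `A` whose
switch is accepted and produces `A'`. -/
def dSwitchCount (A A' : Set (Fin n × Fin n)) : ℕ :=
  {S : Set (Fin n × Fin n) | ∃ i j k l : Fin n,
    i ≠ j ∧ i ≠ k ∧ i ≠ l ∧ j ≠ k ∧ j ≠ l ∧ k ≠ l ∧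
    S = {(i, j), (k, l)} ∧
    (i, j) ∈ A ∧ (k, l) ∈ A ∧ (i, l) ∉ A ∧ (k, j) ∉ A ∧
    A' = (A \ S) ∪ {(i, l), (k, j)}}.ncard

/-- The state space of the directed switch chain, as a type. -/
abbrev OmegaType (dm dp : Fin n → ℕ) : Type :=
  {A : Set (Fin n × Fin n) // A ∈ Omega dm dp}

instance (dm dp : Fin n → ℕ) : Fintype (OmegaType dm dp) := Fintype.ofFinite _

/-- The transition matrix of the directed switch chain on `Omega dm dp`: from `A`,
choose uniformly at random an unordered pair of distinct arcs of `A`; if the four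
endpoints are distinct and the switched arcs are absent, perform the switch, else
stay. -/
def transP (dm dp : Fin n → ℕ) :
    Matrix (OmegaType dm dp) (OmegaType dm dp) ℝ :=
  fun A A' =>
    if A = A' then
      1 - ∑ B : OmegaType dm dp,
        (if B = A then 0 else (dSwitchCount A.1 B.1 : ℝ) / (arcPairCount A.1))
    else (dSwitchCount A.1 A'.1 : ℝ) / (arcPairCount A.1)

/-- Total variation distance between two distributions on a finite set. -/
def dTV {Ω : Type*} [Fintype Ω] (σ σ' : Ω → ℝ) : ℝ := (1 / 2) * ∑ x, |σ x - σ' x|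

/-- The mixing time of a Markov chain with transition matrix `P` and stationary
distribution `π`. -/
def mixingTime {Ω : Type*} [Fintype Ω] (P : Matrix Ω Ω ℝ) (π : Ω → ℝ) (ε : ℝ) : ℕ :=
  Finset.univ.sup fun x : Ω =>
    sInf {T : ℕ | ∀ t, T ≤ t → dTV (fun y => (P ^ t) x y) π ≤ ε}

/-- The uniform distribution on the state space. -/
def uniformDist (dm dp : Fin n → ℕ) : OmegaType dm dp → ℝ :=
  fun _ => (Fintype.card (OmegaType dm dp) : ℝ)⁻¹

/-! ### Canonical paths between perfect matchings -/

section Sorting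

variable {L R : Type*}

/-- The smallest rank occurring on the cycle of `τ` through `x`. -/
def cmin (rk : L → ℕ) (τ : Equiv.Perm L) (x : L) : ℕ :=
  sInf {k | ∃ y, τ.SameCycle x y ∧ rk y = k}

lemma exists_cmin (rk : L → ℕ) (τ : Equiv.Perm L) (x : L) :
    ∃ y, τ.SameCycle x y ∧ rk y = cmin rk τ x :=
  Nat.sInf_mem (s := {k | ∃ y, τ.SameCycle x y ∧ rk y = k})
    ⟨rk x, x, Equiv.Perm.SameCycle.refl _ _, rfl⟩

lemma cmin_congr (rk : L → ℕ) {τ : Equiv.Perm L} {x y : L} (h : τ.SameCycle x y) :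
    cmin rk τ x = cmin rk τ y := by
  unfold cmin
  congr 1
  ext k
  constructor
  · rintro ⟨z, hz, rfl⟩
    exact ⟨z, h.symm.trans hz, rfl⟩
  · rintro ⟨z, hz, rfl⟩
    exact ⟨z, h.trans hz, rfl⟩

lemma cmin_le (rk : L → ℕ) (τ : Equiv.Perm L) (x : L) : cmin rk τ x ≤ rk x :=
  Nat.sInf_le ⟨x, Equiv.Perm.SameCycle.refl _ _, rfl⟩

lemma sameCycle_of_cmin_eq {rk : L → ℕ} (hrk : Function.Injective rk) {τ : Equiv.Perm L}
    {x l : L} (h : cmin rk τ x = rk l) : τ.SameCycle x l := by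
  obtain ⟨y, hy, hy'⟩ := exists_cmin rk τ x
  have : y = l := hrk (hy'.trans h)
  exact this ▸ hy

/-- The permutation `σ'⁻¹σ`, whose cycles are those of the symmetric difference of `σ` and `σ'`. -/
def cyc (σ σ' : L ≃ R) : Equiv.Perm L := σ.trans σ'.symm

lemma cyc_apply (σ σ' : L ≃ R) (x : L) : cyc σ σ' x = σ'.symm (σ x) := rfl

lemma apply_cyc (σ σ' : L ≃ R) (x : L) : σ' (cyc σ σ' x) = σ x := by simp [cyc_apply]

/-- `N` is an intermediate stage of sorting `σ` into `σ'`, the cycle of `σ'⁻¹σ` with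
least-ranked element `l` being under treatment: cycles of smaller minimum already carry the
values of `σ'`, those of larger minimum still carry the values of `σ`, and on the current cycle
every element other than `l` carries one of the two values. The value `N l` is arbitrary, up to
belonging to the current cycle; it plays the role of the unmatched right vertex. -/
structure SortInv (rk : L → ℕ) (σ σ' N : L ≃ R) (l : L) : Prop where
  lt : ∀ x, cmin rk (cyc σ σ') x < rk l → N x = σ' x
  gt : ∀ x, rk l < cmin rk (cyc σ σ') x → N x = σ x
  eq : ∀ x, x ≠ l → cmin rk (cyc σ σ') x = rk l → N x = σ x ∨ N x = σ' x
  mem : cmin rk (cyc σ σ') (σ'.symm (N l)) = rk l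

namespace SortInv

variable {rk : L → ℕ} {σ σ' N : L ≃ R} {l : L}

lemma cmin_self (hrk : Function.Injective rk) (h : SortInv rk σ σ' N l) :
    cmin rk (cyc σ σ') l = rk l := by
  rw [← h.mem]
  exact (cmin_congr rk (sameCycle_of_cmin_eq hrk h.mem)).symm

lemma mem_pair (h : SortInv rk σ σ' N l) (x : L) (hx : x ≠ l) : N x = σ x ∨ N x = σ' x := by
  rcases lt_trichotomy (cmin rk (cyc σ σ') x) (rk l) with h1 | h1 | h1
  · exact Or.inr (h.lt x h1)
  · exact h.eq x hx h1
  · exact Or.inl (h.gt x h1)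

lemma sigma_next (h : SortInv rk σ σ' N l) (hx : σ'.symm (N l) ≠ l) :
    N (σ'.symm (N l)) = σ (σ'.symm (N l)) := by
  rcases h.mem_pair _ hx with h1 | h1
  · exact h1
  · rw [Equiv.apply_symm_apply] at h1
    exact absurd (N.injective h1) hx

/-- Sliding the left vertex matched by `σ'` to the current value at the mark keeps the invariant. -/
lemma step [DecidableEq L] (hrk : Function.Injective rk) (h : SortInv rk σ σ' N l)
    (hx : σ'.symm (N l) ≠ l) :
    SortInv rk σ σ' ((Equiv.swap l (σ'.symm (N l))).trans N) l := by
  have hl := h.cmin_self hrk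
  have hm := h.mem
  have hn := h.sigma_next hx
  set x' := σ'.symm (N l) with hx'
  have key : ∀ x, x ≠ l → x ≠ x' → ((Equiv.swap l x').trans N) x = N x := by
    intro x h1 h2
    simp [Equiv.swap_apply_of_ne_of_ne h1 h2]
  refine ⟨fun x hlt => ?_, fun x hgt => ?_, fun x hxl he => ?_, ?_⟩
  · rw [key x (by rintro rfl; omega) (by rintro rfl; omega)]
    exact h.lt x hlt
  · rw [key x (by rintro rfl; omega) (by rintro rfl; omega)]
    exact h.gt x hgt
  · by_cases hxx : x = x'
    · right
      rw [hxx]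
      simp [hx']
    · rw [key x hxl hxx]
      exact h.eq x hxl he
  · simp only [Equiv.trans_apply, Equiv.swap_apply_left]
    rw [hn, ← hm]
    symm
    apply cmin_congr
    rw [← cyc_apply]
    exact Equiv.Perm.sameCycle_apply_right.2 (Equiv.Perm.SameCycle.refl _ _)

/-- When the current cycle closes up (`N l = σ' l`), it is completely sorted. -/
lemma closed [Finite L] (hrk : Function.Injective rk) (h : SortInv rk σ σ' N l)
    (hc : N l = σ' l) (x : L) (hx : cmin rk (cyc σ σ') x ≤ rk l) : N x = σ' x := by
  rcases hx.lt_or_eq with hx | hx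
  · exact h.lt x hx
  by_contra hne
  have hs : (cyc σ σ').SameCycle x l := sameCycle_of_cmin_eq hrk hx
  obtain ⟨k, -, hk⟩ := hs.exists_pow_eq'
  have : ∀ k : ℕ, N (((cyc σ σ') ^ k) x) ≠ σ' (((cyc σ σ') ^ k) x) := by
    intro k
    induction k with
    | zero => simpa using hne
    | succ k ih =>
      rw [pow_succ', Equiv.Perm.mul_apply]
      set y := ((cyc σ σ') ^ k) x
      have hyl : y ≠ l := by rintro h1; rw [h1] at ih; exact ih hc
      have h1 : N y = σ y := (h.mem_pair y hyl).resolve_right ih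
      have h2 : σ' ((cyc σ σ') y) = σ y := apply_cyc _ _ _
      rw [h2, ← h1]
      intro h3
      have h4 := N.injective h3
      rw [h4, ← h1] at h2
      exact ih h2.symm
  exact this k (hk ▸ hc)

end SortInv

/-- A partially sorted stage, all of whose cycles are either done or untouched, starts a new
cycle unless everything is sorted. -/
lemma exists_sortInv [Finite L] {rk : L → ℕ} {σ σ' N : L ≃ R} {k : ℕ}
    (h1 : ∀ x, cmin rk (cyc σ σ') x < k → N x = σ' x)
    (h2 : ∀ x, k ≤ cmin rk (cyc σ σ') x → N x = σ x) (hne : N ≠ σ') :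
    ∃ l, SortInv rk σ σ' N l ∧ N l ≠ σ' l := by
  have hex : ∃ j, ∃ x, N x ≠ σ' x ∧ cmin rk (cyc σ σ') x = j := by
    by_contra hcon
    push Not at hcon
    apply hne
    ext x
    by_contra hx
    exact hcon _ x hx rfl
  obtain ⟨y, hy, hyj⟩ := Nat.find_spec hex
  have hmin : ∀ x, cmin rk (cyc σ σ') x < cmin rk (cyc σ σ') y → N x = σ' x := by
    intro x hx
    by_contra hx'
    rw [hyj] at hx
    exact Nat.find_min hex hx ⟨x, hx', rfl⟩
  have hky : k ≤ cmin rk (cyc σ σ') y := by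
    by_contra hcon
    exact hy (h1 y (by omega))
  obtain ⟨l, hl, hlr⟩ := exists_cmin rk (cyc σ σ') y
  have hcl : cmin rk (cyc σ σ') l = cmin rk (cyc σ σ') y := (cmin_congr rk hl).symm
  have hNl : N l = σ l := h2 l (by omega)
  refine ⟨l, ⟨fun x hx => hmin x (by omega), fun x hx => h2 x (by omega),
    fun x _ hx => Or.inl (h2 x (by omega)), ?_⟩, ?_⟩
  · rw [hNl]
    have : σ'.symm (σ l) = (cyc σ σ') l := rfl
    rw [this, hlr, ← hcl]
    exact cmin_congr rk (Equiv.Perm.sameCycle_apply_left.2 (Equiv.Perm.SameCycle.refl _ _))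
  · intro hcon
    have hfix : (cyc σ σ') l = l := by
      rw [hNl] at hcon
      simp [cyc_apply, hcon]
    have : y = l := by
      obtain ⟨i, hi⟩ := hl.symm
      rw [← hi, Equiv.Perm.zpow_apply_eq_self_of_apply_eq_self hfix]
    exact hy (this ▸ hcon)

/-- A matching of all left vertices, as a bijection respecting `adj`. -/
def Perfect (adj : L → R → Prop) (σ : L ≃ R) : Prop := ∀ x, adj x (σ x)

/-- A near-perfect matching with unmatched vertices `l` and `N l`: a bijection which respects
`adj` except possibly at `l`. -/
def Near (adj : L → R → Prop) (N : L ≃ R) (l : L) : Prop := ∀ x, x ≠ l → adj x (N x)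

lemma SortInv.near {rk : L → ℕ} {σ σ' N : L ≃ R} {l : L} {adj : L → R → Prop}
    (hσ : Perfect adj σ) (hσ' : Perfect adj σ') (h : SortInv rk σ σ' N l) : Near adj N l := by
  intro x hx
  rcases h.mem_pair x hx with h1 | h1 <;> rw [h1]
  exacts [hσ x, hσ' x]

/-- The canonical path from `σ` to `σ'`, as a set of slides `(N, l, x)`, no two of which move the
same vertex `x`, along which a function `F` telescopes. -/
lemma exists_path [Fintype L] [DecidableEq L] {rk : L → ℕ} (hrk : Function.Injective rk)
    {adj : L → R → Prop}
    (F : (L ≃ R) → L → ℝ) (ft : (L ≃ R) → ℝ)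
    (hF : ∀ σ, Perfect adj σ → ∀ l, F σ l = ft σ)
    {σ σ' : L ≃ R} (hσ : Perfect adj σ) (hσ' : Perfect adj σ') :
    ∀ (c : ℕ) (N : L ≃ R) (l : L), SortInv rk σ σ' N l → N l ≠ σ' l →
      (Finset.univ.filter fun x => N x ≠ σ' x).card = c →
      ∃ P : Finset ((L ≃ R) × L × L),
        (∀ t ∈ P, SortInv rk σ σ' t.1 t.2.1 ∧ t.2.2 = σ'.symm (t.1 t.2.1) ∧ t.2.2 ≠ t.2.1 ∧
          N t.2.2 ≠ σ' t.2.2) ∧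
        Set.InjOn (fun t : (L ≃ R) × L × L => t.2.2) P ∧
        ft σ' - F N l =
          ∑ t ∈ P, (F ((Equiv.swap t.2.1 t.2.2).trans t.1) t.2.1 - F t.1 t.2.1) := by
  intro c
  induction c using Nat.strong_induction_on with
  | _ c ih =>
  intro N l hQ hNl hc
  have hx : σ'.symm (N l) ≠ l := by
    intro h
    apply hNl
    rw [Equiv.symm_apply_eq] at h
    exact h
  have hst := hQ.step hrk hx
  have hnext := hQ.sigma_next hx
  have hs' : σ' (σ'.symm (N l)) = N l := by simp
  set x' := σ'.symm (N l) with hx'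
  set N' := (Equiv.swap l x').trans N with hN'
  have hmx : N x' ≠ σ' x' := by
    rw [hs']
    exact fun h => hx (N.injective h)
  have hN'x : N' x' = σ' x' := by simp [hN', hs']
  have hsub : ∀ x, N' x ≠ σ' x → N x ≠ σ' x := by
    intro x hx1
    by_cases h1 : x = l
    · rw [h1]; exact hNl
    by_cases h2 : x = x'
    · exact absurd (h2 ▸ hN'x) hx1
    · simpa [hN', Equiv.swap_apply_of_ne_of_ne h1 h2] using hx1
  have hlt : (Finset.univ.filter fun x => N' x ≠ σ' x).card < c := by
    rw [← hc]
    apply Finset.card_lt_card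
    rw [Finset.ssubset_iff_of_subset]
    · exact ⟨x', by simpa using hmx, by simpa using hN'x⟩
    · intro x hx1
      simp only [Finset.mem_filter, Finset.mem_univ, true_and] at hx1 ⊢
      exact hsub x hx1
  -- prepend the current slide to a path starting at the next stage
  have glue : ∀ P : Finset ((L ≃ R) × L × L),
      (∀ t ∈ P, SortInv rk σ σ' t.1 t.2.1 ∧ t.2.2 = σ'.symm (t.1 t.2.1) ∧ t.2.2 ≠ t.2.1 ∧
          N' t.2.2 ≠ σ' t.2.2) →
        Set.InjOn (fun t : (L ≃ R) × L × L => t.2.2) P →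
        ft σ' - F N' l =
          ∑ t ∈ P, (F ((Equiv.swap t.2.1 t.2.2).trans t.1) t.2.1 - F t.1 t.2.1) →
      ∃ P : Finset ((L ≃ R) × L × L),
        (∀ t ∈ P, SortInv rk σ σ' t.1 t.2.1 ∧ t.2.2 = σ'.symm (t.1 t.2.1) ∧ t.2.2 ≠ t.2.1 ∧
          N t.2.2 ≠ σ' t.2.2) ∧
        Set.InjOn (fun t : (L ≃ R) × L × L => t.2.2) P ∧
        ft σ' - F N l =
          ∑ t ∈ P, (F ((Equiv.swap t.2.1 t.2.2).trans t.1) t.2.1 - F t.1 t.2.1) := by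
    intro P hP hinj hsum
    have hnot : ∀ t ∈ P, t.2.2 ≠ x' := fun t ht h => (hP t ht).2.2.2 (h ▸ hN'x)
    have hnot' : (N, l, x') ∉ P := fun h => hnot _ h rfl
    refine ⟨insert (N, l, x') P, ?_, ?_, ?_⟩
    · intro t ht
      rcases Finset.mem_insert.1 ht with rfl | ht
      · exact ⟨hQ, rfl, hx, hmx⟩
      · obtain ⟨h1, h2, h3, h4⟩ := hP t ht
        exact ⟨h1, h2, h3, hsub _ h4⟩
    · rw [Finset.coe_insert, Set.injOn_insert (by simpa using hnot')]
      refine ⟨hinj, ?_⟩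
      rintro ⟨t, ht, hteq⟩
      exact hnot t ht hteq
    · rw [Finset.sum_insert hnot', ← hsum]
      simp only [← hN']
      ring
  by_cases hcl : N' l = σ' l
  · have hperf : Perfect adj N' := by
      intro x
      by_cases hxl : x = l
      · rw [hxl, hcl]; exact hσ' l
      · exact hst.near hσ hσ' x hxl
    by_cases hfin : N' = σ'
    · exact glue ∅ (by simp) (by simp) (by rw [hF _ hperf, hfin]; simp)
    · obtain ⟨l2, hl2, hl2'⟩ := exists_sortInv (rk := rk) (σ := σ) (k := rk l + 1)
        (fun x h => hst.closed hrk hcl x (by omega)) (fun x h => hst.gt x (by omega)) hfin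
      obtain ⟨P, h1, h2, h3⟩ := ih _ hlt N' l2 hl2 hl2' rfl
      exact glue P h1 h2 (by rw [← h3, hF _ hperf, hF _ hperf])
  · obtain ⟨P, h1, h2, h3⟩ := ih _ hlt N' l hst hcl rfl
    exact glue P h1 h2 h3

end Sorting

/-! ### Encoding and the Poincaré inequality for perfect matchings -/

section Encoding

variable {L R : Type*} [DecidableEq L]

/-- The encoding of the pair `(σ, σ')` relative to the slide of `x` at the stage `N` with mark
`l`: a near-perfect matching with mark `x` carrying, away from `l` and `x`, the complementary
choice between `σ` and `σ'` to the one made by `N`. -/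
def enc (σ σ' N : L ≃ R) (l x : L) : L ≃ R :=
  ((Equiv.swap l x).trans σ').trans (N.symm.trans σ)

namespace SortInv

variable {rk : L → ℕ} {σ σ' ρ ρ' N : L ≃ R} {l x' : L}

lemma enc_l (hx : x' = σ'.symm (N l)) : enc σ σ' N l x' l = σ l := by
  simp [enc, hx]

lemma enc_compl (h : SortInv rk σ σ' N l) (hx : x' = σ'.symm (N l)) (x : L)
    (h1 : x ≠ l) (h2 : x ≠ x') :
    (N x = σ x ∧ enc σ σ' N l x' x = σ' x) ∨ (N x = σ' x ∧ enc σ σ' N l x' x = σ x) := by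
  have he : enc σ σ' N l x' x = σ (N.symm (σ' x)) := by
    simp [enc, Equiv.swap_apply_of_ne_of_ne h1 h2]
  by_cases hN : N x = σ' x
  · right
    refine ⟨hN, ?_⟩
    rw [he, ← hN, Equiv.symm_apply_apply]
  · left
    refine ⟨(h.mem_pair x h1).resolve_right hN, ?_⟩
    set y := N.symm (σ' x) with hy
    have hNy : N y = σ' x := by simp [hy]
    have hyl : y ≠ l := by
      intro hyl
      apply h2
      rw [hx, ← hyl, hNy, Equiv.symm_apply_apply]
    rw [he]
    rcases h.mem_pair y hyl with h3 | h3
    · rw [← h3, hNy]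
    · rw [hNy] at h3
      exact absurd (σ'.injective h3 ▸ hNy) hN

lemma enc_x' (h : SortInv rk σ σ' N l) (hx : x' = σ'.symm (N l)) (hne : x' ≠ l) :
    enc σ σ' N l x' x' = σ' l := by
  have he : enc σ σ' N l x' x' = σ (N.symm (σ' l)) := by simp [enc]
  set y := N.symm (σ' l) with hy
  have hNy : N y = σ' l := by simp [hy]
  have hyl : y ≠ l := by
    intro hyl
    apply hne
    rw [hx, ← hyl, hNy, Equiv.symm_apply_apply, hyl]
  rw [he]
  rcases h.mem_pair y hyl with h3 | h3
  · rw [← h3, hNy]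
  · rw [hNy] at h3
    exact absurd (σ'.injective h3).symm hyl

lemma enc_near {adj : L → R → Prop} (hσ : Perfect adj σ) (hσ' : Perfect adj σ')
    (h : SortInv rk σ σ' N l) (hx : x' = σ'.symm (N l)) :
    Near adj (enc σ σ' N l x') x' := by
  intro x hxx
  by_cases hl : x = l
  · rw [hl, enc_l hx]
    exact hσ l
  · rcases h.enc_compl hx x hl hxx with h1 | h1 <;> rw [h1.2]
    exacts [hσ' x, hσ x]

/-- The unordered pairs `{σ x, σ' x}` can be read off from the stage and the encoding. -/
lemma pair_iff (h : SortInv rk σ σ' N l) (hx : x' = σ'.symm (N l)) (hne : x' ≠ l)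
    (x : L) (z : R) :
    (z = σ x ∨ z = σ' x) ↔
      (if x = l then z = enc σ σ' N l x' l ∨ z = enc σ σ' N l x' x'
        else if x = x' then z = N x' ∨ z = N l else z = N x ∨ z = enc σ σ' N l x' x) := by
  split_ifs with h1 h2
  · rw [h1, enc_l hx, h.enc_x' hx hne]
  · have h3 : σ' x' = N l := by simp [hx]
    have h4 : N x' = σ x' := by
      rw [hx]
      exact h.sigma_next (hx ▸ hne)
    rw [h2, h3, h4]
  · rcases h.enc_compl hx x h1 h2 with h3 | h3 <;> rw [h3.1, h3.2]
    exact or_comm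

/-- The unordered pairs of values determine the cycles. -/
lemma sameCycle_of_pair
    (hU : ∀ x z, (z = σ x ∨ z = σ' x) ↔ (z = ρ x ∨ z = ρ' x)) {x y : L}
    (h : (cyc σ σ').SameCycle x y) : (cyc ρ ρ').SameCycle x y := by
  have one : ∀ x, (cyc ρ ρ').SameCycle x (cyc σ σ' x) := by
    intro x
    have h1 := (hU x (σ x)).1 (Or.inl rfl)
    have h2 := (hU (cyc σ σ' x) (σ x)).1 (Or.inr (apply_cyc σ σ' x).symm)
    rcases h1 with h1 | h1 <;> rcases h2 with h2 | h2
    · rw [h1] at h2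
      rw [← ρ.injective h2]
    · have : cyc σ σ' x = cyc ρ ρ' x := by
        rw [cyc_apply ρ, ← h1, h2, Equiv.symm_apply_apply]
      rw [this]
      exact Equiv.Perm.sameCycle_apply_right.2 (Equiv.Perm.SameCycle.refl _ _)
    · have : x = cyc ρ ρ' (cyc σ σ' x) := by
        rw [cyc_apply ρ, ← h2, h1, Equiv.symm_apply_apply]
      nth_rewrite 1 [this]
      exact Equiv.Perm.sameCycle_apply_left.2 (Equiv.Perm.SameCycle.refl _ _)
    · rw [h1] at h2
      rw [← ρ'.injective h2]
  have pw : ∀ (k : ℕ) (x : L), (cyc ρ ρ').SameCycle x (((cyc σ σ') ^ k) x) := by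
    intro k
    induction k with
    | zero => intro x; rw [pow_zero]; exact Equiv.Perm.SameCycle.refl _ _
    | succ k ih =>
      intro x
      rw [pow_succ', Equiv.Perm.mul_apply]
      exact (ih x).trans (one _)
  obtain ⟨i, rfl⟩ := h
  cases i with
  | ofNat k => simpa using pw k x
  | negSucc k =>
    have := pw (k + 1) (((cyc σ σ') ^ (Int.negSucc k)) x)
    rw [zpow_negSucc, ← Equiv.Perm.mul_apply, mul_inv_cancel, Equiv.Perm.one_apply] at this
    rw [zpow_negSucc]
    exact this.symm

/-- A pair of perfect matchings is determined by a slide on its canonical path together with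
the encoding. -/
lemma decode [Finite L] (hrk : Function.Injective rk)
    (h : SortInv rk σ σ' N l) (h' : SortInv rk ρ ρ' N l)
    (hx : x' = σ'.symm (N l)) (hx' : x' = ρ'.symm (N l)) (hne : x' ≠ l)
    (he : enc σ σ' N l x' = enc ρ ρ' N l x') : σ = ρ ∧ σ' = ρ' := by
  have hU : ∀ x z, (z = σ x ∨ z = σ' x) ↔ (z = ρ x ∨ z = ρ' x) := by
    intro x z
    rw [h.pair_iff hx hne, h'.pair_iff hx' hne, he]
  have hsc : ∀ x y, (cyc σ σ').SameCycle x y ↔ (cyc ρ ρ').SameCycle x y := fun x y =>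
    ⟨sameCycle_of_pair hU, sameCycle_of_pair fun x z => (hU x z).symm⟩
  have hc : ∀ x, cmin rk (cyc σ σ') x = cmin rk (cyc ρ ρ') x := by
    intro x
    unfold cmin
    simp only [hsc]
  have hself := h.cmin_self hrk
  have hmem : cmin rk (cyc σ σ') x' = rk l := hx ▸ h.mem
  have hl : σ l = ρ l ∧ σ' l = ρ' l := by
    constructor
    · have a := enc_l (σ := σ) hx
      have b := enc_l (σ := ρ) hx'
      rw [he] at a
      exact a.symm.trans b
    · have a := h.enc_x' hx hne
      have b := h'.enc_x' hx' hne
      rw [he] at a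
      exact a.symm.trans b
  have hstep : ∀ x, σ x = ρ x ∧ σ' x = ρ' x →
      σ (cyc σ σ' x) = ρ (cyc σ σ' x) ∧ σ' (cyc σ σ' x) = ρ' (cyc σ σ' x) := by
    rintro x ⟨h1, h2⟩
    have h3 : cyc ρ ρ' x = cyc σ σ' x := by
      have h4 := (hU (cyc ρ ρ' x) (ρ' (cyc ρ ρ' x))).2 (Or.inr rfl)
      rw [apply_cyc, ← h1] at h4
      rcases h4 with h4 | h4
      · have h5 := σ.injective h4
        have h6 := apply_cyc ρ ρ' x
        rw [← h5, ← h2, ← h1] at h6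
        rw [← h5, cyc_apply, ← h6, Equiv.symm_apply_apply]
      · rw [cyc_apply σ, h4, Equiv.symm_apply_apply]
    have h7 : σ' (cyc σ σ' x) = ρ' (cyc σ σ' x) := by
      rw [apply_cyc, h1, ← h3, apply_cyc]
    refine ⟨?_, h7⟩
    rcases (hU (cyc σ σ' x) (σ (cyc σ σ' x))).1 (Or.inl rfl) with h8 | h8
    · exact h8
    · rcases (hU (cyc σ σ' x) (ρ (cyc σ σ' x))).2 (Or.inl rfl) with h9 | h9
      · exact h9.symm
      · rw [h9, h8, h7]
  have hpow : ∀ k : ℕ, σ (((cyc σ σ') ^ k) l) = ρ (((cyc σ σ') ^ k) l) ∧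
      σ' (((cyc σ σ') ^ k) l) = ρ' (((cyc σ σ') ^ k) l) := by
    intro k
    induction k with
    | zero => simpa using hl
    | succ k ih =>
      rw [pow_succ', Equiv.Perm.mul_apply]
      exact hstep _ ih
  have hall : ∀ x, σ x = ρ x ∧ σ' x = ρ' x := by
    intro x
    rcases lt_trichotomy (cmin rk (cyc σ σ') x) (rk l) with h1 | h1 | h1
    · have hxl : x ≠ l := by rintro rfl; omega
      have hxx : x ≠ x' := by rintro rfl; omega
      have e1 := h.lt x h1
      have e2 := h'.lt x (hc x ▸ h1)
      refine ⟨?_, by rw [← e1, ← e2]⟩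
      have f1 : enc σ σ' N l x' x = σ x := by
        rcases h.enc_compl hx x hxl hxx with h3 | h3
        · rw [h3.2, ← h3.1, e1]
        · exact h3.2
      have f2 : enc ρ ρ' N l x' x = ρ x := by
        rcases h'.enc_compl hx' x hxl hxx with h3 | h3
        · rw [h3.2, ← h3.1, e2]
        · exact h3.2
      rw [← f1, ← f2, he]
    · obtain ⟨k, -, hk⟩ := (sameCycle_of_cmin_eq hrk h1).symm.exists_pow_eq'
      exact hk ▸ hpow k
    · have hxl : x ≠ l := by rintro rfl; omega
      have hxx : x ≠ x' := by rintro rfl; omega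
      have e1 := h.gt x h1
      have e2 := h'.gt x (hc x ▸ h1)
      refine ⟨by rw [← e1, ← e2], ?_⟩
      have f1 : enc σ σ' N l x' x = σ' x := by
        rcases h.enc_compl hx x hxl hxx with h3 | h3
        · exact h3.2
        · rw [h3.2, ← h3.1, e1]
      have f2 : enc ρ ρ' N l x' x = ρ' x := by
        rcases h'.enc_compl hx' x hxl hxx with h3 | h3
        · exact h3.2
        · rw [h3.2, ← h3.1, e2]
      rw [← f1, ← f2, he]
  exact ⟨Equiv.ext fun x => (hall x).1, Equiv.ext fun x => (hall x).2⟩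

end SortInv

/-- The canonical path bound for perfect matchings of a bipartite graph. The function `ft` on
perfect matchings is extended to a function `F` on near-perfect ones which is insensitive to the
slides moving a vertex outside `O`; only the slides of vertices of `O` then contribute. -/
theorem matching_poincare [Fintype L] [Fintype R] [DecidableEq R]
    {rk : L → ℕ} (hrk : Function.Injective rk)
    (adj : L → R → Prop) (O : Finset L) (hO : ∀ x ∈ O, ∀ y ∉ O, rk x < rk y)
    (F : (L ≃ R) → L → ℝ) (ft : (L ≃ R) → ℝ)
    (hF : ∀ σ, Perfect adj σ → ∀ l, F σ l = ft σ)
    (hinv : ∀ N l x', x' ∉ O → x' ≠ l → Near adj N l → adj x' (N l) →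
      F ((Equiv.swap l x').trans N) l = F N l)
    (C : ℝ) (hC : ∀ x' ∈ O, ((Finset.univ.filter fun E : L ≃ R => Near adj E x').card : ℝ) ≤ C) :
    ∑ σ with Perfect adj σ, ∑ σ' with Perfect adj σ', (ft σ - ft σ') ^ 2 ≤
      O.card * C * ∑ t : (L ≃ R) × L × L with
        (Near adj t.1 t.2.1 ∧ t.2.1 ∈ O ∧ t.2.2 ∈ O ∧ t.2.2 ≠ t.2.1 ∧ adj t.2.2 (t.1 t.2.1)),
        (F ((Equiv.swap t.2.1 t.2.2).trans t.1) t.2.1 - F t.1 t.2.1) ^ 2 := by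
  set g : (L ≃ R) × L × L → ℝ := fun t =>
    (F ((Equiv.swap t.2.1 t.2.2).trans t.1) t.2.1 - F t.1 t.2.1) ^ 2 with hg
  have hg0 : ∀ t, 0 ≤ g t := fun t => sq_nonneg _
  set T : Finset ((L ≃ R) × L × L) := Finset.univ.filter fun t =>
    (Near adj t.1 t.2.1 ∧ t.2.1 ∈ O ∧ t.2.2 ∈ O ∧ t.2.2 ≠ t.2.1 ∧ adj t.2.2 (t.1 t.2.1)) with hT
  set M : Finset (L ≃ R) := Finset.univ.filter fun σ => Perfect adj σ with hM
  set S : (L ≃ R) → (L ≃ R) → (L ≃ R) × L × L → Prop := fun σ σ' t =>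
    SortInv rk σ σ' t.1 t.2.1 ∧ t.2.2 = σ'.symm (t.1 t.2.1) ∧ t.2.2 ≠ t.2.1 with hS
  have hpair : ∀ σ ∈ M, ∀ σ' ∈ M, (ft σ - ft σ') ^ 2 ≤
      O.card * ∑ t ∈ T, if S σ σ' t then g t else 0 := by
    intro σ hσ σ' hσ'
    have hσ : Perfect adj σ := by simpa [hM] using hσ
    have hσ' : Perfect adj σ' := by simpa [hM] using hσ'
    by_cases heq : σ = σ'
    · subst heq
      simp only [sub_self, ne_eq, OfNat.ofNat_ne_zero, not_false_eq_true, zero_pow]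
      refine mul_nonneg (by positivity) (Finset.sum_nonneg fun t _ => ?_)
      split_ifs
      exacts [hg0 t, le_rfl]
    obtain ⟨l, hl, hl'⟩ := exists_sortInv (rk := rk) (σ := σ) (σ' := σ') (N := σ) (k := 0)
      (fun x h => by omega) (fun x _ => rfl) heq
    obtain ⟨P, hP, hinj, hsum⟩ := exists_path hrk F ft hF hσ hσ' _ σ l hl hl' rfl
    rw [hF σ hσ] at hsum
    set P' := P.filter fun t => t.2.2 ∈ O with hP'
    have hnear : ∀ t ∈ P, Near adj t.1 t.2.1 := fun t ht => (hP t ht).1.near hσ hσ'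
    have hadj : ∀ t ∈ P, adj t.2.2 (t.1 t.2.1) := by
      intro t ht
      have : σ' t.2.2 = t.1 t.2.1 := by rw [(hP t ht).2.1, Equiv.apply_symm_apply]
      rw [← this]
      exact hσ' _
    have hsum' : ft σ' - ft σ =
        ∑ t ∈ P', (F ((Equiv.swap t.2.1 t.2.2).trans t.1) t.2.1 - F t.1 t.2.1) := by
      rw [hsum, hP', Finset.sum_filter]
      refine Finset.sum_congr rfl fun t ht => ?_
      split_ifs with h
      · rfl
      · rw [hinv t.1 t.2.1 t.2.2 h (hP t ht).2.2.1 (hnear t ht) (hadj t ht), sub_self]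
    have hcard : P'.card ≤ O.card := by
      refine Finset.card_le_card_of_injOn (fun t => t.2.2) ?_ ?_
      · intro t ht
        exact (Finset.mem_filter.1 ht).2
      · exact hinj.mono (by intro t ht; exact (Finset.mem_filter.1 ht).1)
    have hsub : P' ⊆ T.filter fun t => S σ σ' t := by
      intro t ht
      obtain ⟨ht, htO⟩ := Finset.mem_filter.1 ht
      obtain ⟨h1, h2, h3, -⟩ := hP t ht
      refine Finset.mem_filter.2 ⟨Finset.mem_filter.2 ⟨Finset.mem_univ _, hnear t ht, ?_, htO, h3,
        hadj t ht⟩, h1, h2, h3⟩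
      by_contra hcon
      have h4 := hO _ htO _ hcon
      have h5 := cmin_le rk (cyc σ σ') t.2.2
      have h6 := h1.mem
      rw [← h2] at h6
      omega
    calc (ft σ - ft σ') ^ 2 = (ft σ' - ft σ) ^ 2 := by ring
      _ ≤ P'.card * ∑ t ∈ P', g t := by
          rw [hsum']
          exact sq_sum_le_card_mul_sum_sq
      _ ≤ O.card * ∑ t ∈ T.filter (fun t => S σ σ' t), g t := by
          gcongr
      _ = _ := by rw [Finset.sum_filter]
  calc ∑ σ ∈ M, ∑ σ' ∈ M, (ft σ - ft σ') ^ 2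
      ≤ ∑ σ ∈ M, ∑ σ' ∈ M, O.card * ∑ t ∈ T, (if S σ σ' t then g t else 0) :=
        Finset.sum_le_sum fun σ hσ => Finset.sum_le_sum fun σ' hσ' => hpair σ hσ σ' hσ'
    _ = O.card * ∑ t ∈ T, ∑ p ∈ M ×ˢ M, (if S p.1 p.2 t then g t else 0) := by
        simp_rw [← Finset.mul_sum]
        rw [← Finset.sum_product', Finset.sum_comm]
    _ ≤ O.card * ∑ t ∈ T, C * g t := by
        gcongr with t ht
        rw [← Finset.sum_filter, Finset.sum_const, nsmul_eq_mul]
        obtain ⟨-, -, -, htO, -, -⟩ := Finset.mem_filter.1 ht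
        refine mul_le_mul_of_nonneg_right (le_trans ?_ (hC _ htO)) (hg0 t)
        norm_cast
        refine Finset.card_le_card_of_injOn (fun p => enc p.1 p.2 t.1 t.2.1 t.2.2) ?_ ?_
        · rintro ⟨σ, σ'⟩ hp
          simp only [Finset.coe_filter, Finset.mem_product, Set.mem_ofPred_eq, hM,
            Finset.mem_filter, Finset.mem_univ, true_and] at hp ⊢
          exact hp.2.1.enc_near hp.1.1 hp.1.2 hp.2.2.1
        · rintro ⟨σ, σ'⟩ hp ⟨ρ, ρ'⟩ hq hpq
          simp only [Finset.coe_filter, Set.mem_ofPred_eq] at hp hq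
          obtain ⟨h1, h2⟩ := hp.2.1.decode hrk hq.2.1 hp.2.2.1 hq.2.2.1 hp.2.2.2 hpq
          simp [h1, h2]
    _ = O.card * C * ∑ t ∈ T, g t := by rw [← Finset.mul_sum, mul_assoc]

end Encoding

/-! ### Pairings and exchanges -/

section Pairings

/-- The out-points: vertex `u` carries `dp u` of them. -/
abbrev OP (dp : Fin n → ℕ) : Type := Σ u : Fin n, Fin (dp u)

variable {dm dp : Fin n → ℕ}

/-- The arc formed by the out-point `a` and its partner in the pairing `φ` of the out-points with
the in-points. In-points of `v` are the elements of `Fin (dm v)`. -/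
def arc (φ : OP dp ≃ OP dm) (a : OP dp) : Fin n × Fin n := (a.1, (φ a).1)

/-- The pairing `φ` projects to a simple digraph. -/
def Simple (φ : OP dp ≃ OP dm) : Prop :=
  (∀ a, a.1 ≠ (φ a).1) ∧ Function.Injective (arc φ)

/-- The pairing `φ` projects to a simple digraph once the pair of the out-point `l` is removed. -/
def NearS (φ : OP dp ≃ OP dm) (l : OP dp) : Prop :=
  (∀ a, a ≠ l → a.1 ≠ (φ a).1) ∧ ∀ a, a ≠ l → ∀ b, b ≠ l → arc φ a = arc φ b → a = b

/-- The arc set of the pairing `φ` without the pair of `l`. -/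
def offs (φ : OP dp ≃ OP dm) (l : OP dp) : Set (Fin n × Fin n) := {e | ∃ a, a ≠ l ∧ arc φ a = e}

/-- The pairing `φ` with the partners of `a` and `b` exchanged. -/
def swp (φ : OP dp ≃ OP dm) (a b : OP dp) : OP dp ≃ OP dm := (Equiv.swap a b).trans φ

lemma swp_left (φ : OP dp ≃ OP dm) (a b : OP dp) : swp φ a b a = φ b := by simp [swp]

lemma swp_right (φ : OP dp ≃ OP dm) (a b : OP dp) : swp φ a b b = φ a := by simp [swp]

lemma swp_of_ne (φ : OP dp ≃ OP dm) {a b c : OP dp} (h1 : c ≠ a) (h2 : c ≠ b) :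
    swp φ a b c = φ c := by simp [swp, Equiv.swap_apply_of_ne_of_ne h1 h2]

lemma swp_self (φ : OP dp ≃ OP dm) (a : OP dp) : swp φ a a = φ := by
  apply Equiv.ext; intro x; simp [swp]

lemma swp_swp (φ : OP dp ≃ OP dm) (a b : OP dp) : swp (swp φ a b) a b = φ := by
  apply Equiv.ext; intro x; simp [swp]

lemma Simple.near {φ : OP dp ≃ OP dm} (h : Simple φ) (l : OP dp) : NearS φ l :=
  ⟨fun a _ => h.1 a, fun _ _ _ _ hab => h.2 hab⟩

lemma simple_swp {φ : OP dp ≃ OP dm} {a b : OP dp}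
    (h1 : ∀ c, c ≠ a → c ≠ b → c.1 ≠ (φ c).1)
    (h2 : ∀ c, c ≠ a → c ≠ b → ∀ d, d ≠ a → d ≠ b → arc φ c = arc φ d → c = d)
    (ha : a.1 ≠ (φ b).1) (hb : b.1 ≠ (φ a).1) (hab : (a.1, (φ b).1) ≠ (b.1, (φ a).1))
    (ha' : ∀ c, c ≠ a → c ≠ b → arc φ c ≠ (a.1, (φ b).1))
    (hb' : ∀ c, c ≠ a → c ≠ b → arc φ c ≠ (b.1, (φ a).1)) : Simple (swp φ a b) := by
  have ea : arc (swp φ a b) a = (a.1, (φ b).1) := by simp [arc, swp_left]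
  have eb : arc (swp φ a b) b = (b.1, (φ a).1) := by simp [arc, swp_right]
  have ec : ∀ c, c ≠ a → c ≠ b → arc (swp φ a b) c = arc φ c := fun c h h' => by
    simp [arc, swp_of_ne φ h h']
  constructor
  · intro c
    by_cases hca : c = a
    · subst hca; rw [swp_left]; exact ha
    by_cases hcb : c = b
    · subst hcb; rw [swp_right]; exact hb
    rw [swp_of_ne φ hca hcb]
    exact h1 c hca hcb
  · intro c d hcd
    by_cases hca : c = a
    · subst hca
      by_cases hda : d = c
      · exact hda.symm
      by_cases hdb : d = b
      · subst hdb
        exact absurd (ea.symm.trans (hcd.trans eb)) hab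
      · exact absurd ((ec d hda hdb).symm.trans (hcd.symm.trans ea)) (ha' d hda hdb)
    by_cases hcb : c = b
    · subst hcb
      by_cases hdb : d = c
      · exact hdb.symm
      by_cases hda : d = a
      · subst hda
        exact absurd (ea.symm.trans (hcd.symm.trans eb)) hab
      · exact absurd ((ec d hda hdb).symm.trans (hcd.symm.trans eb)) (hb' d hda hdb)
    have hc := ec c hca hcb
    by_cases hda : d = a
    · subst hda
      exact absurd (hc.symm.trans (hcd.trans ea)) (ha' c hca hcb)
    by_cases hdb : d = b
    · subst hdb
      exact absurd (hc.symm.trans (hcd.trans eb)) (hb' c hca hcb)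
    exact h2 c hca hcb d hda hdb (hc.symm.trans (hcd.trans (ec d hda hdb)))

/-- The out-point `a` is generic with respect to `l` and `c`: its exchange with `l` yields a simple
pairing, both from `φ` and after `l` and `c` have been exchanged. -/
structure Gen (φ : OP dp ≃ OP dm) (l c a : OP dp) : Prop where
  ne : a ≠ l
  s1 : a.1 ≠ (φ l).1
  s2 : (a.1, (φ l).1) ∉ offs φ l
  t1 : (φ a).1 ≠ l.1
  t2 : (l.1, (φ a).1) ∉ offs φ l
  t3 : (φ a).1 ≠ (φ l).1
  s3 : a.1 ≠ (φ c).1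
  s4 : (a.1, (φ c).1) ∉ offs φ l
  t4 : (φ a).1 ≠ (φ c).1

lemma mem_offs {φ : OP dp ≃ OP dm} {l a : OP dp} (h : a ≠ l) : arc φ a ∈ offs φ l := ⟨a, h, rfl⟩

lemma Gen.simple {φ : OP dp ≃ OP dm} {l c a : OP dp} (hφ : NearS φ l) (h : Gen φ l c a) :
    Simple (swp φ l a) := by
  refine simple_swp (fun c h1 _ => hφ.1 c h1) (fun c h1 _ d h2 _ => hφ.2 c h1 d h2)
    h.t1.symm h.s1 ?_ ?_ ?_
  · intro heq
    apply h.t3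
    rw [Prod.mk.injEq] at heq
    exact heq.2
  · intro d h1 _ heq
    exact h.t2 (heq ▸ mem_offs h1)
  · intro d h1 _ heq
    exact h.s2 (heq ▸ mem_offs h1)

lemma Gen.simple2 {φ : OP dp ≃ OP dm} {l c a : OP dp} (h : Gen φ l c a)
    (hc : Simple (swp φ l c)) (hcl : c ≠ l) : Simple (swp (swp φ l c) l a) := by
  have hac : a ≠ c := fun e => h.t4 (e ▸ rfl)
  have hn := hc.near l
  have ea : swp φ l c a = φ a := swp_of_ne φ h.ne hac
  have el : swp φ l c l = φ c := swp_left φ l c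
  refine simple_swp (fun c h1 _ => hn.1 c h1) (fun c h1 _ d h2 _ => hn.2 c h1 d h2)
    (by rw [ea]; exact h.t1.symm) (by rw [el]; exact h.s3) ?_ ?_ ?_
  · rw [ea, el]
    intro heq
    rw [Prod.mk.injEq] at heq
    exact h.t4 heq.2
  · intro d h1 h2 heq
    rw [ea] at heq
    by_cases hdc : d = c
    · subst hdc
      simp only [arc, swp_right, Prod.mk.injEq] at heq
      exact h.t3 heq.2.symm
    · simp only [arc, swp_of_ne φ h1 hdc] at heq
      exact h.t2 (heq ▸ mem_offs h1)
  · intro d h1 h2 heq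
    rw [el] at heq
    by_cases hdc : d = c
    · subst hdc
      simp only [arc, swp_right, Prod.mk.injEq] at heq
      apply h.s4
      rw [← heq.1]
      exact mem_offs hcl
    · simp only [arc, swp_of_ne φ h1 hdc] at heq
      exact h.s4 (heq ▸ mem_offs h1)

/-- The two simple pairings reached from `φ` by exchanging `l` with `c`, or with a generic `a`, have
a common neighbour. -/
lemma swp_triangle (φ : OP dp ≃ OP dm) {l c a : OP dp} (hcl : c ≠ l) (hac : a ≠ c) (hal : a ≠ l) :
    swp (swp φ l c) l a = swp (swp φ l a) a c := by
  apply Equiv.ext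
  intro x
  simp only [swp, Equiv.trans_apply]
  congr 1
  simp only [Equiv.swap_apply_def]
  grind

lemma card_out (r : ℕ) (hr : ∀ j, dm j ≤ r ∧ dp j ≤ r) (v : Fin n) :
    (Finset.univ.filter fun a : OP dp => a.1 = v).card ≤ r := by
  have : (Finset.univ.filter fun a : OP dp => a.1 = v).card ≤ (Finset.univ : Finset (Fin (dp v))).card := by
    refine Finset.card_le_card_of_surjOn (fun i => ⟨v, i⟩) ?_
    rintro ⟨u, i⟩ h
    simp only [Finset.coe_filter, Finset.mem_univ, true_and, Set.mem_ofPred_eq] at h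
    subst h
    exact ⟨i, by simp⟩
  simpa using this.trans (by simpa using (hr v).2)

lemma card_in (r : ℕ) (hr : ∀ j, dm j ≤ r ∧ dp j ≤ r) (φ : OP dp ≃ OP dm) (v : Fin n) :
    (Finset.univ.filter fun a : OP dp => (φ a).1 = v).card ≤ r := by
  have : (Finset.univ.filter fun a : OP dp => (φ a).1 = v).card ≤
      (Finset.univ.filter fun b : OP dm => b.1 = v).card := by
    refine Finset.card_le_card_of_injOn φ ?_ φ.injective.injOn
    intro a ha
    simpa using ha
  exact this.trans (card_out r (fun j => (hr j).symm) v)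

lemma card_inn (r : ℕ) (hr : ∀ j, dm j ≤ r ∧ dp j ≤ r) (φ : OP dp ≃ OP dm) (l : OP dp) (v : Fin n) :
    (Finset.univ.filter fun a : OP dp => (a.1, v) ∈ offs φ l).card ≤ r * r := by
  have hsub : (Finset.univ.filter fun a : OP dp => (a.1, v) ∈ offs φ l) ⊆
      (Finset.univ.filter fun b : OP dp => (φ b).1 = v).biUnion fun b =>
        Finset.univ.filter fun a : OP dp => a.1 = b.1 := by
    intro a ha
    obtain ⟨b, -, hb⟩ := (Finset.mem_filter.1 ha).2
    simp only [arc, Prod.mk.injEq] at hb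
    simp only [Finset.mem_biUnion, Finset.mem_filter, Finset.mem_univ, true_and]
    exact ⟨b, hb.2, hb.1.symm⟩
  refine (Finset.card_le_card hsub).trans ((Finset.card_biUnion_le_card_mul _ _ r
    fun b _ => card_out r hr _).trans ?_)
  exact Nat.mul_le_mul_right r (card_in r hr φ v)

lemma card_outn (r : ℕ) (hr : ∀ j, dm j ≤ r ∧ dp j ≤ r) (φ : OP dp ≃ OP dm) (l : OP dp) (v : Fin n) :
    (Finset.univ.filter fun a : OP dp => (v, (φ a).1) ∈ offs φ l).card ≤ r * r := by
  have hsub : (Finset.univ.filter fun a : OP dp => (v, (φ a).1) ∈ offs φ l) ⊆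
      (Finset.univ.filter fun b : OP dp => b.1 = v).biUnion fun b =>
        Finset.univ.filter fun a : OP dp => (φ a).1 = (φ b).1 := by
    intro a ha
    obtain ⟨b, -, hb⟩ := (Finset.mem_filter.1 ha).2
    simp only [arc, Prod.mk.injEq] at hb
    simp only [Finset.mem_biUnion, Finset.mem_filter, Finset.mem_univ, true_and]
    exact ⟨b, hb.1, hb.2.symm⟩
  refine (Finset.card_le_card hsub).trans ((Finset.card_biUnion_le_card_mul _ _ r
    fun b _ => card_in r hr φ _).trans ?_)
  exact Nat.mul_le_mul_right r (card_out r hr v)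

lemma card_not_gen (r : ℕ) (hr : ∀ j, dm j ≤ r ∧ dp j ≤ r) (φ : OP dp ≃ OP dm) (l c : OP dp) :
    (Finset.univ.filter fun a : OP dp => ¬ Gen φ l c a).card ≤ 3 * (r * r) + 5 * r + 1 := by
  have hsub : (Finset.univ.filter fun a : OP dp => ¬ Gen φ l c a) ⊆
      {l} ∪ (Finset.univ.filter fun a : OP dp => a.1 = (φ l).1) ∪
      (Finset.univ.filter fun a : OP dp => (a.1, (φ l).1) ∈ offs φ l) ∪
      (Finset.univ.filter fun a : OP dp => (φ a).1 = l.1) ∪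
      (Finset.univ.filter fun a : OP dp => (l.1, (φ a).1) ∈ offs φ l) ∪
      (Finset.univ.filter fun a : OP dp => (φ a).1 = (φ l).1) ∪
      (Finset.univ.filter fun a : OP dp => a.1 = (φ c).1) ∪
      (Finset.univ.filter fun a : OP dp => (a.1, (φ c).1) ∈ offs φ l) ∪
      (Finset.univ.filter fun a : OP dp => (φ a).1 = (φ c).1) := by
    intro a ha
    by_contra hcon
    simp only [Finset.mem_union, Finset.mem_filter, Finset.mem_univ, true_and,
      Finset.mem_singleton, not_or] at hcon
    obtain ⟨⟨⟨⟨⟨⟨⟨⟨h1, h2⟩, h3⟩, h4⟩, h5⟩, h6⟩, h7⟩, h8⟩, h9⟩ := hcon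
    exact (Finset.mem_filter.1 ha).2 ⟨h1, h2, h3, h4, h5, h6, h7, h8, h9⟩
  have e1 := card_out r hr (dp := dp) (φ l).1
  have e2 := card_inn r hr φ l (φ l).1
  have e3 := card_in r hr φ l.1
  have e4 := card_outn r hr φ l l.1
  have e5 := card_in r hr φ (φ l).1
  have e6 := card_out r hr (dp := dp) (φ c).1
  have e7 := card_inn r hr φ l (φ c).1
  have e8 := card_in r hr φ (φ c).1
  refine (Finset.card_le_card hsub).trans ?_
  refine (Finset.card_union_le _ _).trans ?_
  refine (Nat.add_le_add_right (Finset.card_union_le _ _) _).trans ?_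
  refine (Nat.add_le_add_right (Nat.add_le_add_right (Finset.card_union_le _ _) _) _).trans ?_
  refine (Nat.add_le_add_right (Nat.add_le_add_right (Nat.add_le_add_right
    (Finset.card_union_le _ _) _) _) _).trans ?_
  refine (Nat.add_le_add_right (Nat.add_le_add_right (Nat.add_le_add_right (Nat.add_le_add_right
    (Finset.card_union_le _ _) _) _) _) _).trans ?_
  refine (Nat.add_le_add_right (Nat.add_le_add_right (Nat.add_le_add_right (Nat.add_le_add_right
    (Nat.add_le_add_right (Finset.card_union_le _ _) _) _) _) _) _).trans ?_
  refine (Nat.add_le_add_right (Nat.add_le_add_right (Nat.add_le_add_right (Nat.add_le_add_right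
    (Nat.add_le_add_right (Nat.add_le_add_right (Finset.card_union_le _ _) _) _) _) _) _) _).trans ?_
  refine (Nat.add_le_add_right (Nat.add_le_add_right (Nat.add_le_add_right (Nat.add_le_add_right
    (Nat.add_le_add_right (Nat.add_le_add_right (Nat.add_le_add_right (Finset.card_union_le _ _)
    _) _) _) _) _) _) _).trans ?_
  rw [Finset.card_singleton]
  omega

/-- Two near-simple pairings have a common generic out-point. -/
lemma exists_gen (r : ℕ) (hr : ∀ j, dm j ≤ r ∧ dp j ≤ r) (hr2 : 2 ≤ r)
    (hm : 16 * (r * r) ≤ Fintype.card (OP dp)) (φ φ' : OP dp ≃ OP dm) (l c l' c' a' : OP dp) :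
    ∃ a, Gen φ l c a ∧ Gen φ' l' c' a ∧ a ≠ a' := by
  by_contra! hcon
  have hsub : (Finset.univ : Finset (OP dp)) ⊆
      (Finset.univ.filter fun a : OP dp => ¬ Gen φ l c a) ∪
      (Finset.univ.filter fun a : OP dp => ¬ Gen φ' l' c' a) ∪ {a'} := by
    intro a _
    have := hcon a
    simp only [Finset.mem_union, Finset.mem_filter, Finset.mem_univ, true_and,
      Finset.mem_singleton]
    tauto
  have h1 := (Finset.card_le_card hsub).trans ((Finset.card_union_le _ _).trans
    (Nat.add_le_add_right (Finset.card_union_le _ _) _))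
  have h2 := card_not_gen r hr φ l c
  have h3 := card_not_gen r hr φ' l' c'
  rw [Finset.card_singleton, Finset.card_univ] at h1
  nlinarith

end Pairings

/-! ### Repairing near-simple pairings -/

section Repair

variable {dm dp : Fin n → ℕ}

/-- The arc set of the digraph to which the pairing `φ` projects. -/
def arcs (φ : OP dp ≃ OP dm) : Set (Fin n × Fin n) := Set.range (arc φ)

lemma arcs_eq_insert (φ : OP dp ≃ OP dm) (l : OP dp) :
    arcs φ = insert (arc φ l) (offs φ l) := by
  ext e
  constructor
  · rintro ⟨a, rfl⟩
    by_cases h : a = l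
    · left; rw [h]
    · right; exact mem_offs h
  · rintro (rfl | ⟨a, -, rfl⟩)
    exacts [⟨l, rfl⟩, ⟨a, rfl⟩]

lemma arcs_swp {φ : OP dp ≃ OP dm} {l c : OP dp} (hcl : c ≠ l)
    (hi : ∀ a, a ≠ l → arc φ a = arc φ c → a = c) :
    arcs (swp φ l c) = (offs φ l \ {arc φ c}) ∪ {(l.1, (φ c).1), (c.1, (φ l).1)} := by
  ext e
  constructor
  · rintro ⟨a, rfl⟩
    by_cases hal : a = l
    · subst hal
      right; left; simp [arc, swp_left]
    by_cases hac : a = c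
    · subst hac
      right; right; simp [arc, swp_right]
    left
    have : arc (swp φ l c) a = arc φ a := by simp [arc, swp_of_ne φ hal hac]
    rw [this]
    exact ⟨mem_offs hal, fun h => hac (hi a hal h)⟩
  · rintro (⟨⟨a, hal, rfl⟩, hne⟩ | rfl | h)
    · have hac : a ≠ c := by rintro rfl; exact hne rfl
      exact ⟨a, by simp [arc, swp_of_ne φ hal hac]⟩
    · exact ⟨l, by simp [arc, swp_left]⟩
    · rw [Set.mem_singleton_iff] at h
      subst h
      exact ⟨c, by simp [arc, swp_right]⟩

/-- The value of `f` at a digraph obtained by repairing the arc set `A`, from which an arc out of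
`u` and an arc into `w` are missing: the arc `(u, w)` is added when this is possible, and
otherwise a suitable arc `e` is replaced by `(u, e.2)` and `(e.1, w)`. -/
def repairVal (f : Set (Fin n × Fin n) → ℝ) (A : Set (Fin n × Fin n)) (u w : Fin n) : ℝ :=
  if u ≠ w ∧ (u, w) ∉ A then f (insert (u, w) A)
  else f (Classical.epsilon fun B => ∃ e ∈ A, u ≠ e.2 ∧ (u, e.2) ∉ A ∧ e.1 ≠ w ∧ (e.1, w) ∉ A ∧
    B = (A \ {e}) ∪ {(u, e.2), (e.1, w)})

/-- `repairVal` is the value of `f` at a simple pairing one exchange away from the near-simple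
pairing `φ`. -/
lemma exists_repair {r : ℕ} (hr : ∀ j, dm j ≤ r ∧ dp j ≤ r) (hr2 : 2 ≤ r)
    (hm : 16 * (r * r) ≤ Fintype.card (OP dp)) (f : Set (Fin n × Fin n) → ℝ)
    {φ : OP dp ≃ OP dm} {l : OP dp}
    (hφ : NearS φ l) :
    ∃ c, Simple (swp φ l c) ∧ repairVal f (offs φ l) l.1 (φ l).1 = f (arcs (swp φ l c)) := by
  unfold repairVal
  split_ifs with h
  · refine ⟨l, ?_, ?_⟩
    · rw [swp_self]
      constructor
      · intro a
        by_cases hal : a = l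
        · subst hal; exact h.1
        · exact hφ.1 a hal
      · intro a b hab
        by_cases hal : a = l
        · subst hal
          by_cases hbl : b = a
          · exact hbl.symm
          · exact absurd (hab ▸ mem_offs hbl : arc φ a ∈ offs φ a) h.2
        · by_cases hbl : b = l
          · subst hbl
            exact absurd (hab ▸ mem_offs hal : arc φ b ∈ offs φ b) h.2
          · exact hφ.2 a hal b hbl hab
    · rw [swp_self, arcs_eq_insert φ l]
      rfl
  · obtain ⟨a, ha, -⟩ := exists_gen r hr hr2 hm φ φ l l l l l
    have hex : ∃ B, ∃ e ∈ offs φ l, l.1 ≠ e.2 ∧ (l.1, e.2) ∉ offs φ l ∧ e.1 ≠ (φ l).1 ∧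
        (e.1, (φ l).1) ∉ offs φ l ∧ B = (offs φ l \ {e}) ∪ {(l.1, e.2), (e.1, (φ l).1)} :=
      ⟨_, arc φ a, mem_offs ha.ne, ha.t1.symm, ha.t2, ha.s1, ha.s2, rfl⟩
    obtain ⟨e, ⟨c, hcl, rfl⟩, h1, h2, h3, h4, h5⟩ := Classical.epsilon_spec hex
    refine ⟨c, ?_, ?_⟩
    · refine simple_swp (fun c h1 _ => hφ.1 c h1) (fun c h1 _ d h2 _ => hφ.2 c h1 d h2) h1 h3
        ?_ ?_ ?_
      · intro heq
        rw [Prod.mk.injEq] at heq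
        apply h2
        rw [heq.1]
        exact mem_offs hcl
      · intro d hd _ heq
        apply h2
        simp only [arc] at heq ⊢
        rw [← heq]
        exact mem_offs hd
      · intro d hd _ heq
        apply h4
        simp only [arc] at heq ⊢
        rw [← heq]
        exact mem_offs hd
    · rw [h5, arcs_swp hcl fun a hal hac => hφ.2 a hal c hcl hac]
      rfl

/-- Repairing a near-simple pairing by an exchange is at most `m`-to-one. -/
lemma card_near_le {r : ℕ} (hr : ∀ j, dm j ≤ r ∧ dp j ≤ r) (hr2 : 2 ≤ r)
    (hm : 16 * (r * r) ≤ Fintype.card (OP dp)) (l : OP dp) :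
    (Finset.univ.filter fun φ : OP dp ≃ OP dm => NearS φ l).card ≤
      Fintype.card (OP dp) * (Finset.univ.filter fun φ : OP dp ≃ OP dm => Simple φ).card := by
  have hch : ∀ φ : OP dp ≃ OP dm, ∃ c, NearS φ l → Simple (swp φ l c) := by
    intro φ
    by_cases h : NearS φ l
    · obtain ⟨c, hc, -⟩ := exists_repair hr hr2 hm (fun _ => 0) h
      exact ⟨c, fun _ => hc⟩
    · exact ⟨l, fun h' => absurd h' h⟩
  choose c hc using hch
  rw [← Finset.card_univ, ← Finset.card_product]
  refine Finset.card_le_card_of_injOn (fun φ => (c φ, swp φ l (c φ))) ?_ ?_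
  · intro φ hφ
    simp only [Finset.coe_filter, Finset.mem_univ, true_and, Set.mem_ofPred_eq] at hφ
    simpa using hc φ hφ
  · intro φ _ ψ _ h
    simp only [Prod.mk.injEq] at h
    rw [← swp_swp φ l (c φ), h.2, h.1, swp_swp]

/-- The local Dirichlet form at `ψ` of a function of the digraph of a pairing. -/
def locD (f : Set (Fin n × Fin n) → ℝ) (ψ : OP dp ≃ OP dm) : ℝ :=
  ∑ p : OP dp, ∑ q : OP dp, if Simple ψ ∧ Simple (swp ψ p q) then
    (f (arcs ψ) - f (arcs (swp ψ p q))) ^ 2 else 0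

lemma locD_nonneg (f : Set (Fin n × Fin n) → ℝ) (ψ : OP dp ≃ OP dm) : 0 ≤ locD f ψ :=
  Finset.sum_nonneg fun p _ => Finset.sum_nonneg fun q _ => by split_ifs <;> positivity

lemma sq_le_locD (f : Set (Fin n × Fin n) → ℝ) {ψ : OP dp ≃ OP dm} (p q : OP dp)
    (h1 : Simple ψ) (h2 : Simple (swp ψ p q)) :
    (f (arcs ψ) - f (arcs (swp ψ p q))) ^ 2 ≤ locD f ψ := by
  unfold locD
  have h0 : ∀ p q, (0 : ℝ) ≤ if Simple ψ ∧ Simple (swp ψ p q) then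
    (f (arcs ψ) - f (arcs (swp ψ p q))) ^ 2 else 0 := fun p q => by split_ifs <;> positivity
  refine le_trans ?_ (Finset.single_le_sum (fun p _ => Finset.sum_nonneg fun q _ => h0 p q)
    (Finset.mem_univ p))
  refine le_trans ?_ (Finset.single_le_sum (fun q _ => h0 p q) (Finset.mem_univ q))
  rw [if_pos ⟨h1, h2⟩]

lemma leg_le (f : Set (Fin n × Fin n) → ℝ) {φ : OP dp ≃ OP dm} {l c a : OP dp}
    (hφ : NearS φ l) (hc : Simple (swp φ l c)) (ha : Gen φ l c a) :
    (f (arcs (swp φ l c)) - f (arcs (swp φ l a))) ^ 2 ≤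
      2 * (locD f (swp φ l c) + locD f (swp φ l a)) := by
  have hsa := ha.simple hφ
  have n1 := locD_nonneg f (swp φ l c)
  have n2 := locD_nonneg f (swp φ l a)
  by_cases hcl : c = l
  · subst hcl
    have := sq_le_locD f c a hc (by rw [swp_self]; exact hsa)
    rw [swp_self] at this n1 ⊢
    linarith
  · have hac : a ≠ c := fun e => ha.t4 (e ▸ rfl)
    have h1 := sq_le_locD f l a hc (ha.simple2 hc hcl)
    have h2 := sq_le_locD f a c hsa (by
      rw [← swp_triangle φ hcl hac ha.ne]; exact ha.simple2 hc hcl)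
    rw [← swp_triangle φ hcl hac ha.ne] at h2
    nlinarith [sq_nonneg (f (arcs (swp φ l c)) + f (arcs (swp φ l a)) -
      2 * f (arcs (swp (swp φ l c) l a)))]

/-- The repairs of two near-simple pairings that differ by a slide are joined by a bounded number of
exchanges between simple pairings, through a common generic out-point. -/
lemma slide_le {r : ℕ} (hr : ∀ j, dm j ≤ r ∧ dp j ≤ r) (hr2 : 2 ≤ r)
    (hm : 16 * (r * r) ≤ Fintype.card (OP dp)) (f : Set (Fin n × Fin n) → ℝ)
    {φ : OP dp ≃ OP dm} {l a' : OP dp}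
    (hφ : NearS φ l) (ha' : a' ≠ l) (hφ' : NearS (swp φ l a') l) :
    (repairVal f (offs (swp φ l a') l) l.1 (swp φ l a' l).1 -
      repairVal f (offs φ l) l.1 (φ l).1) ^ 2 ≤
      15 * ∑ x, locD f (swp φ l x) + 12 * ∑ x, locD f (swp (swp φ l a') l x) := by
  obtain ⟨c, hc, e⟩ := exists_repair hr hr2 hm f hφ
  obtain ⟨c', hc', e'⟩ := exists_repair hr hr2 hm f hφ'
  obtain ⟨a, ha, hga', haa'⟩ := exists_gen r hr hr2 hm φ (swp φ l a') l c l c' a'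
  rw [e, e']
  have h1 := leg_le f hφ hc ha
  have h2 := leg_le f hφ' hc' hga'
  have ht := swp_triangle φ ha' haa' ha.ne
  have h3 := sq_le_locD f a a' (ha.simple hφ) (by rw [← ht]; exact hga'.simple hφ')
  rw [← ht] at h3
  have b : ∀ (ψ : OP dp ≃ OP dm) x, locD f (swp ψ l x) ≤ ∑ x, locD f (swp ψ l x) := fun ψ x =>
    Finset.single_le_sum (f := fun x => locD f (swp ψ l x)) (fun x _ => locD_nonneg f _)
      (Finset.mem_univ x)
  have b1 := b φ c
  have b2 := b φ a
  have b3 := b (swp φ l a') c'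
  have b4 := b (swp φ l a') a
  set x1 := f (arcs (swp φ l c))
  set x2 := f (arcs (swp φ l a))
  set x3 := f (arcs (swp (swp φ l a') l a))
  set x4 := f (arcs (swp (swp φ l a') l c'))
  have h4 : (x4 - x1) ^ 2 ≤ 3 * ((x1 - x2) ^ 2 + (x2 - x3) ^ 2 + (x4 - x3) ^ 2) := by
    nlinarith [sq_nonneg ((x1 - x2) - (x2 - x3)), sq_nonneg ((x1 - x2) - (x3 - x4)),
      sq_nonneg ((x2 - x3) - (x3 - x4))]
  linarith

lemma sum_swp (g : (OP dp ≃ OP dm) → ℝ) (l x : OP dp) : ∑ φ, g (swp φ l x) = ∑ φ, g φ :=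
  Finset.sum_bijective (fun φ => swp φ l x)
    (Function.Involutive.bijective fun φ => swp_swp φ l x) (by simp) (by simp)

lemma sum_slide_le {r : ℕ} (hr : ∀ j, dm j ≤ r ∧ dp j ≤ r) (hr2 : 2 ≤ r)
    (hm : 16 * (r * r) ≤ Fintype.card (OP dp)) (f : Set (Fin n × Fin n) → ℝ) :
    ∑ t : (OP dp ≃ OP dm) × OP dp × OP dp with
        (NearS t.1 t.2.1 ∧ t.2.2 ≠ t.2.1 ∧ NearS (swp t.1 t.2.1 t.2.2) t.2.1),
      (repairVal f (offs (swp t.1 t.2.1 t.2.2) t.2.1) t.2.1.1 (swp t.1 t.2.1 t.2.2 t.2.1).1 -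
        repairVal f (offs t.1 t.2.1) t.2.1.1 (t.1 t.2.1).1) ^ 2 ≤
      27 * (Fintype.card (OP dp) : ℝ) ^ 3 * ∑ ψ : OP dp ≃ OP dm, locD f ψ := by
  set D := ∑ ψ : OP dp ≃ OP dm, locD f ψ
  calc _ ≤ ∑ t : (OP dp ≃ OP dm) × OP dp × OP dp with
        (NearS t.1 t.2.1 ∧ t.2.2 ≠ t.2.1 ∧ NearS (swp t.1 t.2.1 t.2.2) t.2.1),
        (15 * ∑ x, locD f (swp t.1 t.2.1 x) +
          12 * ∑ x, locD f (swp (swp t.1 t.2.1 t.2.2) t.2.1 x)) := by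
        refine Finset.sum_le_sum fun t ht => ?_
        obtain ⟨-, h1, h2, h3⟩ := Finset.mem_filter.1 ht
        exact slide_le hr hr2 hm f h1 h2 h3
    _ ≤ ∑ t : (OP dp ≃ OP dm) × OP dp × OP dp,
        (15 * ∑ x, locD f (swp t.1 t.2.1 x) +
          12 * ∑ x, locD f (swp (swp t.1 t.2.1 t.2.2) t.2.1 x)) := by
        refine Finset.sum_le_sum_of_subset_of_nonneg (Finset.filter_subset _ _) fun t _ _ => ?_
        have := Finset.sum_nonneg fun x (_ : x ∈ Finset.univ) =>
          locD_nonneg f (swp t.1 t.2.1 x)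
        have := Finset.sum_nonneg fun x (_ : x ∈ Finset.univ) =>
          locD_nonneg f (swp (swp t.1 t.2.1 t.2.2) t.2.1 x)
        positivity
    _ = ∑ l : OP dp, ∑ a' : OP dp, ∑ φ : OP dp ≃ OP dm, (15 * ∑ x, locD f (swp φ l x) +
          12 * ∑ x, locD f (swp (swp φ l a') l x)) := by
        rw [Fintype.sum_prod_type, Finset.sum_comm, Fintype.sum_prod_type]
    _ = ∑ l : OP dp, ∑ a' : OP dp, 27 * ((Fintype.card (OP dp) : ℝ) * D) := by
        refine Finset.sum_congr rfl fun l _ => Finset.sum_congr rfl fun a' _ => ?_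
        have e1 : ∑ φ : OP dp ≃ OP dm, ∑ x, locD f (swp φ l x) = Fintype.card (OP dp) * D := by
          rw [Finset.sum_comm]
          simp_rw [sum_swp (locD f)]
          simp [D]
        have e2 : ∑ φ : OP dp ≃ OP dm, ∑ x, locD f (swp (swp φ l a') l x) =
            Fintype.card (OP dp) * D := by
          rw [sum_swp (fun φ => ∑ x, locD f (swp φ l x)), e1]
        rw [Finset.sum_add_distrib, ← Finset.mul_sum, ← Finset.mul_sum, e1, e2]
        ring
    _ = _ := by
        simp only [Finset.sum_const, Finset.card_univ, nsmul_eq_mul]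
        ring

end Repair

/-! ### The auxiliary bipartite graph -/

section Gadget

variable {dm dp : Fin n → ℕ}

/-- Left vertices of the auxiliary bipartite graph: out-points, and a node for each possible
arc. -/
abbrev Lg (dp : Fin n → ℕ) : Type := OP dp ⊕ (Fin n × Fin n)

/-- Right vertices of the auxiliary bipartite graph: a node for each possible arc, and
in-points. -/
abbrev Rg (dm : Fin n → ℕ) : Type := (Fin n × Fin n) ⊕ OP dm

/-- The auxiliary bipartite graph. In a perfect matching the two nodes of an arc `e` are matched
to each other when `e` is absent, and to an out-point of the tail and an in-point of the head of
`e` when it is present. -/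
def gadj : Lg dp → Rg dm → Prop
  | .inl a, .inl e => e.1 = a.1 ∧ e.1 ≠ e.2
  | .inl _, .inr _ => False
  | .inr e, .inl e' => e = e'
  | .inr e, .inr b => e.2 = b.1

/-- The head of a right vertex. -/
def hd : Rg dm → Fin n
  | .inl e => e.2
  | .inr b => b.1

/-- The pairing `φ` is obtained from the matching `N` by following each out-point through an
arc node, if any, to an in-point. -/
def Rel (N : Lg dp ≃ Rg dm) (φ : OP dp ≃ OP dm) : Prop :=
  ∀ a, N (.inl a) = .inr (φ a) ∨ ∃ e, N (.inl a) = .inl e ∧ N (.inr e) = .inr (φ a)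

lemma gadj_inl {a : OP dp} {z : Rg dm} (h : gadj (.inl a) z) :
    ∃ e, z = .inl e ∧ e.1 = a.1 ∧ e.1 ≠ e.2 := by
  cases z with
  | inl e => exact ⟨e, rfl, h⟩
  | inr b => exact h.elim

lemma gadj_inr {e : Fin n × Fin n} {z : Rg dm} (h : gadj (dp := dp) (.inr e) z) : hd z = e.2 := by
  cases z with
  | inl e' => exact congrArg Prod.snd (show e = e' from h).symm
  | inr b => exact (show e.2 = b.1 from h).symm

lemma card_eq (hsum : ∑ j, dm j = ∑ j, dp j) : Fintype.card (OP dp) = Fintype.card (OP dm) := by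
  simp [hsum]

lemma exists_rel (hsum : ∑ j, dm j = ∑ j, dp j) {N : Lg dp ≃ Rg dm} {l : OP dp}
    (hN : Near gadj N (.inl l)) : ∃ φ, Rel N φ := by
  have h : ∀ a, ∃ b, N (.inl a) = .inr b ∨ ∃ e, N (.inl a) = .inl e ∧ N (.inr e) = .inr b := by
    intro a
    rcases ha : N (.inl a) with e | b
    · rcases he : N (.inr e) with e' | b
      · have : e = e' := by
          have := hN (.inr e) (by simp)
          rwa [he] at this
        subst this
        exact absurd (N.injective (ha.trans he.symm)) (by simp)
      · exact ⟨b, Or.inr ⟨e, rfl, he⟩⟩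
    · exact ⟨b, Or.inl rfl⟩
  choose g hg using h
  have hinj : Function.Injective g := by
    intro a a' haa
    have h1 := hg a
    have h2 := hg a'
    rw [← haa] at h2
    rcases h1 with h1 | ⟨e, h1, h1'⟩ <;> rcases h2 with h2 | ⟨e', h2, h2'⟩
    · exact Sum.inl_injective (N.injective (h1.trans h2.symm))
    · exact absurd (N.injective (h1.trans h2'.symm)) (by simp)
    · exact absurd (N.injective (h2.trans h1'.symm)) (by simp)
    · have : e = e' := Sum.inr_injective (N.injective (h1'.trans h2'.symm))
      subst this
      exact Sum.inl_injective (N.injective (h1.trans h2.symm))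
  have hbij : Function.Bijective g :=
    (Fintype.bijective_iff_injective_and_card g).2 ⟨hinj, card_eq hsum⟩
  exact ⟨Equiv.ofBijective g hbij, hg⟩

section RelFacts

variable {N : Lg dp ≃ Rg dm} {φ : OP dp ≃ OP dm} {l : OP dp}

lemma Rel.of_ne (hR : Rel N φ) (hN : Near gadj N (.inl l)) {a : OP dp} (ha : a ≠ l) :
    N (.inl a) = .inl (arc φ a) ∧ a.1 ≠ (φ a).1 := by
  obtain ⟨e, he, h1, h2⟩ := gadj_inl (hN (.inl a) (by simpa using ha))
  rcases hR a with h | ⟨e', h, h'⟩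
  · simp [he] at h
  · have : e' = e := by rw [he] at h; exact (Sum.inl_injective h).symm
    subst this
    have h3 := hN (.inr e') (by simp)
    rw [h'] at h3
    have h3 : e'.2 = (φ a).1 := h3
    have h4 : e' = arc φ a := Prod.ext h1 h3
    rw [h, ← h4]
    refine ⟨rfl, ?_⟩
    rw [← h1, ← h3]
    exact h2

lemma Rel.inr_of_inl (hR : Rel N φ) {a : OP dp} {e : Fin n × Fin n} (h : N (.inl a) = .inl e) :
    N (.inr e) = .inr (φ a) := by
  rcases hR a with h' | ⟨e', h', h''⟩
  · simp [h] at h'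
  · rw [h] at h'
    rw [Sum.inl_injective h', h'']

lemma Rel.inl_of_inr (hR : Rel N φ) {e : Fin n × Fin n} {b : OP dm} (h : N (.inr e) = .inr b) :
    N (.inl (φ.symm b)) = .inl e := by
  rcases hR (φ.symm b) with h' | ⟨e', h', h''⟩
  · rw [Equiv.apply_symm_apply, ← h] at h'
    exact absurd (N.injective h') (by simp)
  · rw [Equiv.apply_symm_apply, ← h] at h''
    rw [h', Sum.inr_injective (N.injective h'')]

lemma Rel.hd_eq (hR : Rel N φ) (hN : Near gadj N (.inl l)) : hd (N (.inl l)) = (φ l).1 := by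
  rcases hR l with h | ⟨e, h, h'⟩
  · rw [h]; rfl
  · have h3 := hN (.inr e) (by simp)
    rw [h'] at h3
    rw [h]
    exact h3

lemma Rel.nearS (hR : Rel N φ) (hN : Near gadj N (.inl l)) : NearS φ l := by
  refine ⟨fun a ha => (hR.of_ne hN ha).2, fun a ha b hb hab => ?_⟩
  have h1 := (hR.of_ne hN ha).1
  have h2 := (hR.of_ne hN hb).1
  rw [hab] at h1
  exact Sum.inl_injective (N.injective (h1.trans h2.symm))

lemma Rel.offs_eq (hR : Rel N φ) (hN : Near gadj N (.inl l)) :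
    {e | ∃ a, a ≠ l ∧ N (.inl a) = .inl e} = offs φ l := by
  ext e
  constructor
  · rintro ⟨a, ha, h⟩
    refine ⟨a, ha, ?_⟩
    rw [(hR.of_ne hN ha).1] at h
    exact Sum.inl_injective h
  · rintro ⟨a, ha, rfl⟩
    exact ⟨a, ha, (hR.of_ne hN ha).1⟩

/-- A near-perfect matching is determined by its pairing and its value at the unmatched
out-point. -/
lemma Rel.ext {N' : Lg dp ≃ Rg dm} (hR : Rel N φ) (hR' : Rel N' φ) (hN : Near gadj N (.inl l))
    (hN' : Near gadj N' (.inl l)) (hl : N (.inl l) = N' (.inl l)) : N = N' := by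
  have hinl : ∀ a, N (.inl a) = N' (.inl a) := by
    intro a
    by_cases ha : a = l
    · rw [ha, hl]
    · rw [(hR.of_ne hN ha).1, (hR'.of_ne hN' ha).1]
  apply Equiv.ext
  rintro (a | e)
  · exact hinl a
  · rcases h : N (.inr e) with e1 | b <;> rcases h' : N' (.inr e) with e2 | b'
    · have h1 := hN (.inr e) (by simp)
      have h2 := hN' (.inr e) (by simp)
      rw [h] at h1
      rw [h'] at h2
      rw [← show e = e1 from h1, ← show e = e2 from h2]
    · have h1 := hR'.inl_of_inr h'
      rw [← hinl] at h1
      rw [hR.inr_of_inl h1] at h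
      simp at h
    · have h1 := hR.inl_of_inr h
      rw [hinl] at h1
      rw [hR'.inr_of_inl h1] at h'
      simp at h'
    · have h1 := hR.inl_of_inr h
      rw [hinl] at h1
      rw [hR'.inr_of_inl h1] at h'
      simpa using h'

lemma near_slide (hN : Near gadj N (.inl l)) {a' : OP dp} (h : gadj (.inl a') (N (.inl l))) :
    Near gadj ((Equiv.swap (.inl l) (.inl a')).trans N) (.inl l) := by
  intro x hx
  by_cases hxa : x = .inl a'
  · subst hxa
    simpa using h
  · rw [Equiv.trans_apply, Equiv.swap_apply_of_ne_of_ne hx hxa]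
    exact hN x hx

/-- Slides of out-points in the auxiliary graph are exchanges of the pairing. -/
lemma Rel.slide (hR : Rel N φ) :
    ∀ {a' : OP dp}, Rel ((Equiv.swap (.inl l) (.inl a')).trans N) (swp φ l a') := by
  intro a' a
  have hinr : ∀ e, ((Equiv.swap (.inl l) (.inl a')).trans N) (.inr e) = N (.inr e) := by
    intro e
    rw [Equiv.trans_apply, Equiv.swap_apply_of_ne_of_ne (by simp) (by simp)]
  simp only [hinr]
  by_cases h1 : a = l
  · subst h1
    simpa [swp_left] using hR a'
  by_cases h2 : a = a'
  · subst h2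
    simpa [swp_right] using hR l
  rw [swp_of_ne φ h1 h2, Equiv.trans_apply, Equiv.swap_apply_of_ne_of_ne (by simpa using h1)
    (by simpa using h2)]
  exact hR a

end RelFacts

/-- Every simple pairing comes from a perfect matching of the auxiliary graph. -/
lemma exists_perfect (hsum : ∑ j, dm j = ∑ j, dp j) {φ : OP dp ≃ OP dm} (hφ : Simple φ) :
    ∃ σ : Lg dp ≃ Rg dm, Perfect gadj σ ∧ Rel σ φ ∧
      {e | ∃ a, σ (.inl a) = .inl e} = arcs φ := by
  set g : Lg dp → Rg dm := fun x => match x with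
    | .inl a => .inl (arc φ a)
    | .inr e => if h : ∃ a, arc φ a = e then .inr (φ h.choose) else .inl e with hg
  have g1 : ∀ a, g (.inl a) = .inl (arc φ a) := fun a => rfl
  have g2 : ∀ a, g (.inr (arc φ a)) = .inr (φ a) := by
    intro a
    have h : ∃ b, arc φ b = arc φ a := ⟨a, rfl⟩
    have : h.choose = a := hφ.2 h.choose_spec
    simp only [hg, dif_pos h, this]
  have g3 : ∀ e, (¬ ∃ a, arc φ a = e) → g (.inr e) = .inl e := by
    intro e h
    simp only [hg, dif_neg h]
  have hinj : Function.Injective g := by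
    rintro (a | e) (a' | e') h
    · rw [g1, g1] at h
      rw [hφ.2 (Sum.inl_injective h)]
    · by_cases he : ∃ b, arc φ b = e'
      · obtain ⟨b, rfl⟩ := he
        rw [g1, g2] at h
        simp at h
      · rw [g1, g3 e' he] at h
        exact absurd ⟨a, Sum.inl_injective h⟩ he
    · by_cases he : ∃ b, arc φ b = e
      · obtain ⟨b, rfl⟩ := he
        rw [g1, g2] at h
        simp at h
      · rw [g1, g3 e he] at h
        exact absurd ⟨a', (Sum.inl_injective h).symm⟩ he
    · by_cases he : ∃ b, arc φ b = e <;> by_cases he' : ∃ b, arc φ b = e'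
      · obtain ⟨b, rfl⟩ := he
        obtain ⟨b', rfl⟩ := he'
        rw [g2, g2] at h
        rw [φ.injective (Sum.inr_injective h)]
      · obtain ⟨b, rfl⟩ := he
        rw [g2, g3 e' he'] at h
        simp at h
      · obtain ⟨b', rfl⟩ := he'
        rw [g2, g3 e he] at h
        simp at h
      · rw [g3 e he, g3 e' he'] at h
        rw [Sum.inl_injective h]
  have hbij : Function.Bijective g := by
    refine (Fintype.bijective_iff_injective_and_card g).2 ⟨hinj, ?_⟩
    rw [Fintype.card_sum, Fintype.card_sum, card_eq hsum, add_comm]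
  refine ⟨Equiv.ofBijective g hbij, ?_, fun a => Or.inr ⟨arc φ a, g1 a, g2 a⟩, ?_⟩
  · rintro (a | e)
    · exact ⟨rfl, hφ.1 a⟩
    · rw [Equiv.ofBijective_apply]
      by_cases he : ∃ b, arc φ b = e
      · obtain ⟨b, rfl⟩ := he
        rw [g2]
        rfl
      · rw [g3 e he]
        rfl
  · ext e
    constructor
    · rintro ⟨a, ha⟩
      exact ⟨a, Sum.inl_injective ha⟩
    · rintro ⟨a, rfl⟩
      exact ⟨a, rfl⟩

lemma Rel.unique {N : Lg dp ≃ Rg dm} {φ ψ : OP dp ≃ OP dm} (h : Rel N φ) (h' : Rel N ψ) :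
    φ = ψ := by
  apply Equiv.ext
  intro a
  rcases hN : N (.inl a) with e | b
  · have := h.inr_of_inl hN
    rw [h'.inr_of_inl hN] at this
    exact (Sum.inr_injective this).symm
  · have h1 := h a
    have h2 := h' a
    simp only [hN, Sum.inr.injEq, reduceCtorEq, false_and, exists_false, or_false] at h1 h2
    rw [← h1, ← h2]

/-- The extension to near-perfect matchings of the function of the digraph. -/
def Fext (f : Set (Fin n × Fin n) → ℝ) (N : Lg dp ≃ Rg dm) : Lg dp → ℝ
  | .inl l => repairVal f {e | ∃ a, a ≠ l ∧ N (.inl a) = .inl e} l.1 (hd (N (.inl l)))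
  | .inr _ => f {e | ∃ a, N (.inl a) = .inl e}

lemma Fext_perfect (f : Set (Fin n × Fin n) → ℝ) {σ : Lg dp ≃ Rg dm} (hσ : Perfect gadj σ)
    (l : Lg dp) : Fext f σ l = f {e | ∃ a, σ (.inl a) = .inl e} := by
  cases l with
  | inr _ => rfl
  | inl l =>
    obtain ⟨e, he, h1, h2⟩ := gadj_inl (hσ (.inl l))
    have hpair : (l.1, hd (σ (.inl l))) = e := by
      rw [he, ← h1]
      rfl
    simp only [Fext, repairVal]
    rw [if_pos, hpair]
    · congr 1
      ext e'
      constructor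
      · rintro (rfl | ⟨a, -, h⟩)
        exacts [⟨l, he⟩, ⟨a, h⟩]
      · rintro ⟨a, h⟩
        by_cases ha : a = l
        · left
          rw [ha, he] at h
          exact (Sum.inl_injective h).symm
        · right
          exact ⟨a, ha, h⟩
    · rw [hpair]
      constructor
      · rw [← h1, he]
        exact h2
      · rintro ⟨a, ha, h⟩
        exact ha (Sum.inl_injective (σ.injective (h.trans he.symm)))

/-- Sliding an arc node changes neither the arcs chosen by the out-points nor the head of the
unmatched right vertex, so it leaves `Fext` unchanged. -/
lemma Fext_slide (f : Set (Fin n × Fin n) → ℝ) {N : Lg dp ≃ Rg dm} {l : Lg dp}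
    {e' : Fin n × Fin n} (hne : Sum.inr e' ≠ l) (hN : Near gadj N l)
    (h : gadj (dp := dp) (.inr e') (N l)) :
    Fext f ((Equiv.swap l (.inr e')).trans N) l = Fext f N l := by
  cases l with
  | inl l =>
    simp only [Fext]
    have h1 : ∀ a, a ≠ l →
        ((Equiv.swap (.inl l) (.inr e')).trans N) (.inl a) = N (.inl a) := by
      intro a ha
      rw [Equiv.trans_apply, Equiv.swap_apply_of_ne_of_ne (by simpa using ha) (by simp)]
    have h2 : hd (((Equiv.swap (.inl l) (.inr e')).trans N) (.inl l)) = hd (N (.inl l)) := by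
      rw [Equiv.trans_apply, Equiv.swap_apply_left, gadj_inr h, gadj_inr (hN _ hne)]
    rw [h2]
    congr 1
    ext e
    refine exists_congr fun a => and_congr_right fun ha => ?_
    rw [h1 a ha]
  | inr e0 =>
    simp only [Fext]
    have h1 : ∀ a, ((Equiv.swap (.inr e0) (.inr e')).trans N) (.inl a) = N (.inl a) := by
      intro a
      rw [Equiv.trans_apply, Equiv.swap_apply_of_ne_of_ne (by simp) (by simp)]
    simp only [h1]

/-- A near-perfect matching is determined by its pairing and its value at the mark, which is either
an arc node or the in-point paired with the mark. -/
lemma card_near_gadget (hsum : ∑ j, dm j = ∑ j, dp j) (l : OP dp) :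
    (Finset.univ.filter fun N : Lg dp ≃ Rg dm => Near gadj N (.inl l)).card ≤
      (n * n + 1) * (Finset.univ.filter fun φ : OP dp ≃ OP dm => NearS φ l).card := by
  have hch : ∀ N : Lg dp ≃ Rg dm, ∃ φ, Near gadj N (.inl l) → Rel N φ := by
    intro N
    by_cases h : Near gadj N (.inl l)
    · obtain ⟨φ, hφ⟩ := exists_rel hsum h
      exact ⟨φ, fun _ => hφ⟩
    · exact ⟨Fintype.equivOfCardEq (card_eq hsum), fun h' => absurd h' h⟩
  choose φ hφ using hch
  have hcard : (Finset.univ : Finset (Option (Fin n × Fin n))).card = n * n + 1 := by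
    simp
  rw [← hcard, ← Finset.card_product]
  refine Finset.card_le_card_of_injOn
    (fun N => (Sum.elim some (fun _ => none) (N (.inl l)), φ N)) ?_ ?_
  · intro N hN
    simp only [Finset.coe_filter, Finset.mem_univ, true_and, Set.mem_ofPred_eq] at hN
    simpa using (hφ N hN).nearS hN
  · intro N hN N' hN' h
    simp only [Finset.coe_filter, Finset.mem_univ, true_and, Set.mem_ofPred_eq] at hN hN'
    simp only [Prod.mk.injEq] at h
    have hR := hφ N hN
    have hR' := hφ N' hN'
    rw [← h.2] at hR'
    refine hR.ext hR' hN hN' ?_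
    rcases h1 : N (.inl l) with e | b <;> rcases h2 : N' (.inl l) with e' | b'
    · simpa [h1, h2] using h.1
    · simp [h1, h2] at h
    · simp [h1, h2] at h
    · have e1 := hR l
      have e2 := hR' l
      simp only [h1, h2, Sum.inr.injEq, reduceCtorEq, false_and, exists_false, or_false] at e1 e2
      rw [e1, e2]

end Gadget

/-! ### The Poincaré inequality for simple pairings -/

section PairingPoincare

variable {dm dp : Fin n → ℕ}

/-- The Poincaré inequality for simple pairings and exchanges, from `matching_poincare` in the
auxiliary graph. -/
theorem pairing_poincare (hsum : ∑ j, dm j = ∑ j, dp j) {r : ℕ}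
    (hr : ∀ j, dm j ≤ r ∧ dp j ≤ r) (hr2 : 2 ≤ r) (hm : 16 * (r * r) ≤ Fintype.card (OP dp))
    (f : Set (Fin n × Fin n) → ℝ) :
    ∑ φ : OP dp ≃ OP dm with Simple φ, ∑ φ' : OP dp ≃ OP dm with Simple φ',
        (f (arcs φ) - f (arcs φ')) ^ 2 ≤
      27 * (n * n + 1) * (Fintype.card (OP dp) : ℝ) ^ 5 *
        (Finset.univ.filter fun φ : OP dp ≃ OP dm => Simple φ).card *
        ∑ ψ : OP dp ≃ OP dm, locD f ψ := by
  set m := Fintype.card (OP dp) with hmdef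
  set S := Finset.univ.filter fun φ : OP dp ≃ OP dm => Simple φ with hS
  -- with out-points ranked before arc nodes, every cycle containing an out-point is marked by one
  set rk : Lg dp → ℕ := Sum.elim (fun a => (Fintype.equivFin (OP dp) a : ℕ))
    (fun e => m + (Fintype.equivFin (Fin n × Fin n) e : ℕ)) with hrk
  have hrki : Function.Injective rk := by
    rintro (a | e) (a' | e') h
    · simp only [hrk, Sum.elim_inl] at h
      rw [(Fintype.equivFin (OP dp)).injective (Fin.ext h)]
    · simp only [hrk, Sum.elim_inl, Sum.elim_inr] at h
      have := (Fintype.equivFin (OP dp) a).2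
      omega
    · simp only [hrk, Sum.elim_inl, Sum.elim_inr] at h
      have := (Fintype.equivFin (OP dp) a').2
      omega
    · simp only [hrk, Sum.elim_inr, add_right_inj] at h
      rw [(Fintype.equivFin (Fin n × Fin n)).injective (Fin.ext h)]
  set O : Finset (Lg dp) := Finset.univ.map Function.Embedding.inl with hO
  have hOi : ∀ a, (Sum.inl a : Lg dp) ∈ O := by intro a; simp [hO]
  have hOr : ∀ e, (Sum.inr e : Lg dp) ∉ O := by intro e; simp [hO]
  have hOcard : O.card = m := by simp [hO, hmdef]
  have key := matching_poincare (L := Lg dp) (R := Rg dm) hrki gadj O ?_ (Fext f)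
    (fun σ => f {e | ∃ a, σ (.inl a) = .inl e}) (fun σ hσ l => Fext_perfect f hσ l) ?_
    (((n * n + 1) * (m * S.card) : ℕ) : ℝ) ?_
  rotate_left
  · rintro (a | e) hx (a' | e') hy
    · exact absurd (hOi a') hy
    · simp only [hrk, Sum.elim_inl, Sum.elim_inr]
      have := (Fintype.equivFin (OP dp) a).2
      omega
    · exact absurd hx (hOr e)
    · exact absurd hx (hOr e)
  · rintro N l (a | e) hx hne hN hadj
    · exact absurd (hOi a) hx
    · exact Fext_slide f hne hN hadj
  · rintro (a | e) hx
    · norm_cast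
      exact (card_near_gadget hsum a).trans
        (Nat.mul_le_mul_left _ (card_near_le hr hr2 hm a))
    · exact absurd hx (hOr e)
  have hlhs : ∑ φ ∈ S, ∑ φ' ∈ S, (f (arcs φ) - f (arcs φ')) ^ 2 ≤
      ∑ σ : Lg dp ≃ Rg dm with Perfect gadj σ, ∑ σ' : Lg dp ≃ Rg dm with Perfect gadj σ',
        (f {e | ∃ a, σ (.inl a) = .inl e} - f {e | ∃ a, σ' (.inl a) = .inl e}) ^ 2 := by
    have hch : ∀ φ : OP dp ≃ OP dm, ∃ σ : Lg dp ≃ Rg dm, Simple φ → Perfect gadj σ ∧ Rel σ φ ∧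
        {e | ∃ a, σ (.inl a) = .inl e} = arcs φ := by
      intro φ
      by_cases h : Simple φ
      · obtain ⟨σ, hσ⟩ := exists_perfect hsum h
        exact ⟨σ, fun _ => hσ⟩
      · refine ⟨Fintype.equivOfCardEq ?_, fun h' => absurd h' h⟩
        rw [Fintype.card_sum, Fintype.card_sum, card_eq hsum, add_comm]
    choose σ hσ using hch
    have hinj : Set.InjOn σ (S : Set (OP dp ≃ OP dm)) := by
      intro φ hφ ψ hψ h
      have h1 := (hσ φ (by simpa [hS] using hφ)).2.1
      have h2 := (hσ ψ (by simpa [hS] using hψ)).2.1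
      rw [h] at h1
      exact h1.unique h2
    have hsub : S.image σ ⊆ Finset.univ.filter fun σ : Lg dp ≃ Rg dm => Perfect gadj σ := by
      intro τ hτ
      obtain ⟨φ, hφ, rfl⟩ := Finset.mem_image.1 hτ
      simpa using (hσ φ (by simpa [hS] using hφ)).1
    calc _ = ∑ τ ∈ S.image σ, ∑ τ' ∈ S.image σ,
        (f {e | ∃ a, τ (.inl a) = .inl e} - f {e | ∃ a, τ' (.inl a) = .inl e}) ^ 2 := by
          rw [Finset.sum_image hinj]
          refine Finset.sum_congr rfl fun φ hφ => ?_
          rw [Finset.sum_image hinj]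
          refine Finset.sum_congr rfl fun φ' hφ' => ?_
          rw [(hσ φ (by simpa [hS] using hφ)).2.2, (hσ φ' (by simpa [hS] using hφ')).2.2]
      _ ≤ _ := by
          refine (Finset.sum_le_sum fun τ _ => Finset.sum_le_sum_of_subset_of_nonneg hsub
            fun _ _ _ => sq_nonneg _).trans ?_
          exact Finset.sum_le_sum_of_subset_of_nonneg hsub
            fun _ _ _ => Finset.sum_nonneg fun _ _ => sq_nonneg _
  refine hlhs.trans (key.trans ?_)
  have hrhs : ∑ t : (Lg dp ≃ Rg dm) × Lg dp × Lg dp with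
        (Near gadj t.1 t.2.1 ∧ t.2.1 ∈ O ∧ t.2.2 ∈ O ∧ t.2.2 ≠ t.2.1 ∧ gadj t.2.2 (t.1 t.2.1)),
        (Fext f ((Equiv.swap t.2.1 t.2.2).trans t.1) t.2.1 - Fext f t.1 t.2.1) ^ 2 ≤
      27 * (m : ℝ) ^ 3 * ∑ ψ : OP dp ≃ OP dm, locD f ψ := by
    refine le_trans ?_ (sum_slide_le hr hr2 hm f)
    have hch : ∀ t : (Lg dp ≃ Rg dm) × Lg dp × Lg dp, ∃ s : (OP dp ≃ OP dm) × OP dp × OP dp,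
        (Near gadj t.1 t.2.1 ∧ t.2.1 ∈ O ∧ t.2.2 ∈ O ∧ t.2.2 ≠ t.2.1 ∧ gadj t.2.2 (t.1 t.2.1)) →
        Rel t.1 s.1 ∧ t.2.1 = .inl s.2.1 ∧ t.2.2 = .inl s.2.2 := by
      rintro ⟨N, l, x⟩
      by_cases h : (Near gadj N l ∧ l ∈ O ∧ x ∈ O ∧ x ≠ l ∧ gadj x (N l))
      · obtain ⟨h1, h2, h3, -⟩ := h
        rcases l with l | l
        · rcases x with x | x
          · obtain ⟨φ, hφ⟩ := exists_rel hsum h1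
            exact ⟨(φ, l, x), fun _ => ⟨hφ, rfl, rfl⟩⟩
          · exact absurd h3 (hOr _)
        · exact absurd h2 (hOr _)
      · have : 0 < Fintype.card (OP dp) := by nlinarith
        obtain ⟨a⟩ := Fintype.card_pos_iff.1 this
        exact ⟨(Fintype.equivOfCardEq (card_eq hsum), a, a), fun h' => absurd h' h⟩
    choose s hs using hch
    set g : (OP dp ≃ OP dm) × OP dp × OP dp → ℝ := fun t =>
      (repairVal f (offs (swp t.1 t.2.1 t.2.2) t.2.1) t.2.1.1 (swp t.1 t.2.1 t.2.2 t.2.1).1 -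
        repairVal f (offs t.1 t.2.1) t.2.1.1 (t.1 t.2.1).1) ^ 2 with hg
    set T := Finset.univ.filter fun t : (Lg dp ≃ Rg dm) × Lg dp × Lg dp =>
        (Near gadj t.1 t.2.1 ∧ t.2.1 ∈ O ∧ t.2.2 ∈ O ∧ t.2.2 ≠ t.2.1 ∧ gadj t.2.2 (t.1 t.2.1))
      with hT
    have hTm : ∀ t ∈ T, Near gadj t.1 t.2.1 ∧ t.2.1 ∈ O ∧ t.2.2 ∈ O ∧ t.2.2 ≠ t.2.1 ∧
        gadj t.2.2 (t.1 t.2.1) := fun t ht => (Finset.mem_filter.1 ht).2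
    have hinj : Set.InjOn s (T : Set ((Lg dp ≃ Rg dm) × Lg dp × Lg dp)) := by
      rintro ⟨N, l, x⟩ ht ⟨N', l', x'⟩ ht' hss
      obtain ⟨h1, -, -, -, h2⟩ := hTm _ ht
      obtain ⟨h1', -, -, -, h2'⟩ := hTm _ ht'
      obtain ⟨hR, e1, e2⟩ := hs _ (hTm _ ht)
      obtain ⟨hR', e1', e2'⟩ := hs _ (hTm _ ht')
      rw [← hss] at hR' e1' e2'
      dsimp only at h1 h2 h1' h2' hR e1 e2 hR' e1' e2'
      generalize s (N, l, x) = s0 at hR e1 e2 hR' e1' e2'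
      subst e1 e2 e1' e2'
      have : N = N' := by
        refine hR.ext hR' h1 h1' ?_
        obtain ⟨e, he, k1, -⟩ := gadj_inl h2
        obtain ⟨e', he', k1', -⟩ := gadj_inl h2'
        have k2 := hR.hd_eq h1
        have k2' := hR'.hd_eq h1'
        rw [he] at k2 ⊢
        rw [he'] at k2' ⊢
        congr 1
        exact Prod.ext (k1.trans k1'.symm) (k2.trans k2'.symm)
      rw [this]
    have hval : ∀ t ∈ T, (Fext f ((Equiv.swap t.2.1 t.2.2).trans t.1) t.2.1 -
        Fext f t.1 t.2.1) ^ 2 = g (s t) ∧ s t ∈ Finset.univ.filter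
        fun t : (OP dp ≃ OP dm) × OP dp × OP dp =>
        (NearS t.1 t.2.1 ∧ t.2.2 ≠ t.2.1 ∧ NearS (swp t.1 t.2.1 t.2.2) t.2.1) := by
      rintro ⟨N, l, x⟩ ht
      obtain ⟨h1, -, -, h3, h2⟩ := hTm _ ht
      obtain ⟨hR, e1, e2⟩ := hs _ (hTm _ ht)
      generalize s (N, l, x) = s0 at hR e1 e2
      dsimp only at h1 h2 h3 hR e1 e2 ⊢
      subst e1 e2
      have h4 := near_slide h1 h2
      have hR2 := hR.slide (l := s0.2.1) (a' := s0.2.2)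
      constructor
      · simp only [Fext, hg]
        rw [hR.hd_eq h1, hR2.hd_eq h4, hR.offs_eq h1, hR2.offs_eq h4]
      · simp only [Finset.mem_filter, Finset.mem_univ, true_and]
        exact ⟨hR.nearS h1, fun h => h3 (by rw [h]), hR2.nearS h4⟩
    calc _ = ∑ t ∈ T, g (s t) := Finset.sum_congr rfl fun t ht => (hval t ht).1
      _ = ∑ t ∈ T.image s, g t := (Finset.sum_image hinj).symm
      _ ≤ _ := by
          refine Finset.sum_le_sum_of_subset_of_nonneg ?_ fun _ _ _ => sq_nonneg _
          intro t' ht'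
          obtain ⟨t, ht, rfl⟩ := Finset.mem_image.1 ht'
          exact (hval t ht).2
  rw [hOcard]
  refine (mul_le_mul_of_nonneg_left hrhs (by positivity)).trans (le_of_eq ?_)
  push_cast
  ring

end PairingPoincare

/-! ### From pairings to digraphs -/

section Fibres

variable {dm dp : Fin n → ℕ}

/-- An arc seen from its tail, and the same arc seen from its head. -/
def tailHead (G : Set (Fin n × Fin n)) :
    (Σ u : Fin n, {w // (u, w) ∈ G}) ≃ (Σ v : Fin n, {u // (u, v) ∈ G}) where
  toFun x := ⟨x.2.1, ⟨x.1, x.2.2⟩⟩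
  invFun x := ⟨x.2.1, ⟨x.1, x.2.2⟩⟩
  left_inv _ := rfl
  right_inv _ := rfl

/-- The pairing that projects to `G` and is given by labellings of the out-arcs and of the in-arcs
of each vertex. -/
def lab (G : Set (Fin n × Fin n))
    (x : (∀ u, Fin (dp u) ≃ {w // (u, w) ∈ G}) × (∀ v, {u // (u, v) ∈ G} ≃ Fin (dm v))) :
    OP dp ≃ OP dm :=
  (Equiv.sigmaCongrRight x.1).trans ((tailHead G).trans (Equiv.sigmaCongrRight x.2))

lemma arc_lab (G : Set (Fin n × Fin n))
    (x : (∀ u, Fin (dp u) ≃ {w // (u, w) ∈ G}) × (∀ v, {u // (u, v) ∈ G} ≃ Fin (dm v)))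
    (u : Fin n) (p : Fin (dp u)) : arc (lab G x) ⟨u, p⟩ = (u, (x.1 u p).1) := rfl

lemma lab_injective (G : Set (Fin n × Fin n)) :
    Function.Injective (lab (dm := dm) (dp := dp) G) := by
  rintro ⟨α, β⟩ ⟨α', β'⟩ h
  have hα : α = α' := by
    funext u
    ext p
    have := congrArg (fun φ => (arc φ ⟨u, p⟩).2) h
    simp only [arc_lab] at this
    rw [this]
  subst hα
  congr 1
  funext v
  apply Equiv.ext
  rintro ⟨u, hu⟩
  have := congrArg (fun φ => φ ⟨u, (α u).symm ⟨v, hu⟩⟩) h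
  simpa [lab, tailHead, Equiv.sigmaCongrRight] using this

lemma simple_lab {G : Set (Fin n × Fin n)} (hG : ∀ a ∈ G, a.1 ≠ a.2)
    (x : (∀ u, Fin (dp u) ≃ {w // (u, w) ∈ G}) × (∀ v, {u // (u, v) ∈ G} ≃ Fin (dm v))) :
    Simple (lab G x) ∧ arcs (lab G x) = G := by
  refine ⟨⟨?_, ?_⟩, ?_⟩
  · rintro ⟨u, p⟩
    exact hG _ (x.1 u p).2
  · rintro ⟨u, p⟩ ⟨u', p'⟩ h
    rw [arc_lab, arc_lab, Prod.mk.injEq] at h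
    obtain ⟨rfl, h⟩ := h
    rw [(x.1 u).injective (Subtype.ext h)]
  · ext ⟨u, w⟩
    constructor
    · rintro ⟨⟨u', p⟩, h⟩
      rw [arc_lab] at h
      rw [← h]
      exact (x.1 u' p).2
    · intro h
      refine ⟨⟨u, (x.1 u).symm ⟨w, h⟩⟩, ?_⟩
      rw [arc_lab]
      simp

lemma exists_lab {φ : OP dp ≃ OP dm} (h : Simple φ) : ∃ x, lab (arcs φ) x = φ := by
  have hα : ∀ u, Function.Bijective
      (fun p : Fin (dp u) => (⟨(φ ⟨u, p⟩).1, ⟨⟨u, p⟩, rfl⟩⟩ : {w // (u, w) ∈ arcs φ})) := by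
    intro u
    constructor
    · intro p p' hp
      have h1 : arc φ ⟨u, p⟩ = arc φ ⟨u, p'⟩ := by
        exact Prod.ext rfl (congrArg Subtype.val hp)
      simpa using h.2 h1
    · rintro ⟨w, ⟨⟨u', p⟩, hp⟩⟩
      obtain ⟨rfl, rfl⟩ := Prod.mk.inj hp
      exact ⟨p, rfl⟩
  have hβ : ∀ v, Function.Bijective
      (fun q : Fin (dm v) => (⟨(φ.symm ⟨v, q⟩).1, ⟨φ.symm ⟨v, q⟩, by simp [arc]⟩⟩ :
        {u // (u, v) ∈ arcs φ})) := by
    intro v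
    constructor
    · intro q q' hq
      have h1 : arc φ (φ.symm ⟨v, q⟩) = arc φ (φ.symm ⟨v, q'⟩) := by
        have h2 : (φ.symm ⟨v, q⟩).1 = (φ.symm ⟨v, q'⟩).1 := congrArg Subtype.val hq
        simp [arc, h2]
      simpa using h.2 h1
    · rintro ⟨u, ⟨a, ha⟩⟩
      obtain ⟨rfl, rfl⟩ := Prod.mk.inj ha
      exact ⟨(φ a).2, by simp⟩
  refine ⟨(fun u => Equiv.ofBijective _ (hα u), fun v => (Equiv.ofBijective _ (hβ v)).symm), ?_⟩
  apply Equiv.ext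
  rintro ⟨u, p⟩
  have : (Equiv.ofBijective _ (hβ (φ ⟨u, p⟩).1)).symm ⟨u, ⟨⟨u, p⟩, rfl⟩⟩ = (φ ⟨u, p⟩).2 := by
    rw [Equiv.symm_apply_eq]
    apply Subtype.ext
    simp
  exact Sigma.ext rfl (heq_of_eq this)

lemma arcs_mem_Omega {φ : OP dp ≃ OP dm} (h : Simple φ) : arcs φ ∈ Omega dm dp := by
  obtain ⟨⟨α, β⟩, -⟩ := exists_lab h
  refine ⟨?_, fun j => ?_, fun j => ?_⟩
  · rintro _ ⟨a, rfl⟩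
    exact h.1 a
  · rw [← Nat.card_coe_set_eq]
    exact (Nat.card_congr (α j)).symm.trans (Nat.card_fin _)
  · rw [← Nat.card_coe_set_eq]
    exact (Nat.card_congr (β j)).trans (Nat.card_fin _)

/-- The number of pairings over a given simple digraph, by `card_fib`. -/
def fib (dm dp : Fin n → ℕ) : ℕ := (∏ u, (dp u).factorial) * ∏ v, (dm v).factorial

lemma fib_pos : 0 < fib dm dp :=
  Nat.mul_pos (Finset.prod_pos fun _ _ => Nat.factorial_pos _)
    (Finset.prod_pos fun _ _ => Nat.factorial_pos _)

lemma card_fib {G : Set (Fin n × Fin n)} (hG : G ∈ Omega dm dp) :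
    (Finset.univ.filter fun φ : OP dp ≃ OP dm => Simple φ ∧ arcs φ = G).card = fib dm dp := by
  have h1 : (Finset.univ.filter fun φ : OP dp ≃ OP dm => Simple φ ∧ arcs φ = G)
      = Finset.univ.image (lab (dm := dm) (dp := dp) G) := by
    ext φ
    simp only [Finset.mem_filter, Finset.mem_univ, true_and, Finset.mem_image]
    constructor
    · rintro ⟨h, rfl⟩
      exact exists_lab h
    · rintro ⟨x, rfl⟩
      exact simple_lab hG.1 x
  rw [h1, Finset.card_image_of_injective _ (lab_injective G), Finset.card_univ, Fintype.card_prod,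
    Fintype.card_pi, Fintype.card_pi, fib]
  congr 1
  · refine Finset.prod_congr rfl fun u _ => ?_
    have e : Fintype.card {w // (u, w) ∈ G} = Fintype.card (Fin (dp u)) := by
      rw [Fintype.card_fin, ← hG.2.1 u, ← Nat.card_coe_set_eq, Nat.card_eq_fintype_card]
      rfl
    rw [Fintype.card_equiv (Fintype.equivOfCardEq e.symm), Fintype.card_fin]
  · refine Finset.prod_congr rfl fun v _ => ?_
    have e : Fintype.card {u // (u, v) ∈ G} = Fintype.card (Fin (dm v)) := by
      rw [Fintype.card_fin, ← hG.2.2 v, ← Nat.card_coe_set_eq, Nat.card_eq_fintype_card]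
      rfl
    rw [Fintype.card_equiv (Fintype.equivOfCardEq e), e, Fintype.card_fin]

/-- Sums over simple pairings of a function of the arc set are sums over `Omega`. -/
lemma sum_simple (F : Set (Fin n × Fin n) → ℝ) :
    ∑ φ : OP dp ≃ OP dm with Simple φ, F (arcs φ) = fib dm dp * ∑ G : OmegaType dm dp, F G.1 := by
  have h := Finset.sum_fiberwise_of_maps_to (s := Finset.univ.filter fun φ : OP dp ≃ OP dm =>
    Simple φ) (t := Finset.univ.image (fun G : OmegaType dm dp => G.1)) (g := arcs)
    (f := fun φ => F (arcs φ)) (fun φ hφ => by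
      simp only [Finset.mem_filter, Finset.mem_univ, true_and] at hφ
      exact Finset.mem_image.2 ⟨⟨_, arcs_mem_Omega hφ⟩, Finset.mem_univ _, rfl⟩)
  rw [← h, Finset.sum_image (fun a _ b _ hab => Subtype.ext hab), Finset.mul_sum]
  refine Finset.sum_congr rfl fun G _ => ?_
  rw [Finset.filter_filter, Finset.sum_congr rfl (g := fun _ => F G.1), Finset.sum_const,
    card_fib G.2, nsmul_eq_mul]
  intro φ hφ
  rw [(Finset.mem_filter.1 hφ).2.2]

/-- An exchange between simple pairings projects to a switch, or to nothing when the two arcs share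
their tail or their head. -/
lemma arcs_or_switch {φ : OP dp ≃ OP dm} {a b : OP dp} (h : Simple φ) (h' : Simple (swp φ a b)) :
    arcs (swp φ a b) = arcs φ ∨ DSwitch (arcs φ) (arcs (swp φ a b)) := by
  by_cases hab : a = b
  · subst hab
    rw [swp_self]
    exact Or.inl rfl
  have hba : b ≠ a := Ne.symm hab
  have e1 := arcs_swp hba (fun c _ hc => h.2 hc)
  have hoff : offs φ a = arcs φ \ {arc φ a} := by
    ext e
    simp only [offs, arcs, Set.mem_ofPred_eq, Set.mem_sdiff, Set.mem_range, Set.mem_singleton_iff]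
    constructor
    · rintro ⟨c, hc, rfl⟩
      exact ⟨⟨c, rfl⟩, fun hh => hc (h.2 hh)⟩
    · rintro ⟨⟨c, rfl⟩, hc⟩
      exact ⟨c, fun hh => hc (by rw [hh]), rfl⟩
  have e2 : arcs (swp φ a b) = (arcs φ \ {(a.1, (φ a).1), (b.1, (φ b).1)}) ∪
      {(a.1, (φ b).1), (b.1, (φ a).1)} := by
    rw [e1, hoff]
    ext e
    simp [arc]
    tauto
  have ma : (a.1, (φ a).1) ∈ arcs φ := ⟨a, rfl⟩
  have mb : (b.1, (φ b).1) ∈ arcs φ := ⟨b, rfl⟩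
  by_cases h1 : a.1 = b.1
  · left
    rw [e2, h1, Set.pair_comm (b.1, (φ b).1), Set.sdiff_union_of_subset]
    rintro e (rfl | rfl)
    · rw [← h1]; exact ma
    · exact mb
  by_cases h2 : (φ a).1 = (φ b).1
  · left
    rw [e2, h2, Set.sdiff_union_of_subset]
    rintro e (rfl | rfl)
    · rw [← h2]; exact ma
    · exact mb
  right
  have n1 := h.1 a
  have n2 := h.1 b
  have n3 := h'.1 a
  have n4 := h'.1 b
  rw [swp_left] at n3
  rw [swp_right] at n4
  refine ⟨a.1, (φ a).1, b.1, (φ b).1, n1, h1, n3, n4.symm, h2, n2, ma, mb, ?_, ?_, e2⟩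
  · rintro ⟨c, hc⟩
    by_cases hca : c = a
    · subst hca
      exact h2 (Prod.mk.inj hc).2
    by_cases hcb : c = b
    · subst hcb
      exact h1 (Prod.mk.inj hc).1.symm
    apply hca
    apply h'.2
    rw [arc, arc, swp_left, swp_of_ne φ hca hcb]
    exact hc
  · rintro ⟨c, hc⟩
    by_cases hca : c = a
    · subst hca
      exact h1 (Prod.mk.inj hc).1
    by_cases hcb : c = b
    · subst hcb
      exact h2 (Prod.mk.inj hc).2.symm
    apply hcb
    apply h'.2
    rw [arc, arc, swp_right, swp_of_ne φ hca hcb]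
    exact hc

/-- The Dirichlet form of the switch graph. -/
def swD (dm dp : Fin n → ℕ) (f : Set (Fin n × Fin n) → ℝ) : ℝ :=
  ∑ X : OmegaType dm dp, ∑ Y : OmegaType dm dp,
    if DSwitch X.1 Y.1 then (f X.1 - f Y.1) ^ 2 else 0

lemma sum_locD_le (f : Set (Fin n × Fin n) → ℝ) :
    ∑ ψ : OP dp ≃ OP dm, locD f ψ ≤
      (Fintype.card (OP dp) : ℝ) ^ 2 * (fib dm dp * swD dm dp f) := by
  have key : ∀ ψ : OP dp ≃ OP dm, locD f ψ ≤ if Simple ψ then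
      (Fintype.card (OP dp) : ℝ) ^ 2 * ∑ Y : OmegaType dm dp,
        (if DSwitch (arcs ψ) Y.1 then (f (arcs ψ) - f Y.1) ^ 2 else 0) else 0 := by
    intro ψ
    by_cases hs : Simple ψ
    · rw [if_pos hs, locD]
      have nn : ∀ Y : OmegaType dm dp, 0 ≤
          (if DSwitch (arcs ψ) Y.1 then (f (arcs ψ) - f Y.1) ^ 2 else 0) := by
        intro Y; split_ifs <;> positivity
      have : ∀ p q : OP dp, (if Simple ψ ∧ Simple (swp ψ p q) then
          (f (arcs ψ) - f (arcs (swp ψ p q))) ^ 2 else 0) ≤ ∑ Y : OmegaType dm dp,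
          (if DSwitch (arcs ψ) Y.1 then (f (arcs ψ) - f Y.1) ^ 2 else 0) := by
        intro p q
        split_ifs with hpq
        · rcases arcs_or_switch hpq.1 hpq.2 with he | he
          · rw [he, sub_self]
            simpa using Finset.sum_nonneg fun Y _ => nn Y
          · refine le_trans ?_ (Finset.single_le_sum (fun Y _ => nn Y)
              (Finset.mem_univ (⟨_, arcs_mem_Omega hpq.2⟩ : OmegaType dm dp)))
            simp [he]
        · exact Finset.sum_nonneg fun Y _ => nn Y
      refine (Finset.sum_le_sum fun p _ => Finset.sum_le_sum fun q _ => this p q).trans ?_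
      simp only [Finset.sum_const, Finset.card_univ, nsmul_eq_mul]
      apply le_of_eq
      ring
    · simp [locD, hs]
  refine (Finset.sum_le_sum fun ψ _ => key ψ).trans ?_
  rw [← Finset.sum_filter, ← Finset.mul_sum]
  rw [sum_simple (dm := dm) (dp := dp) (fun A => ∑ Y : OmegaType dm dp,
        (if DSwitch A Y.1 then (f A - f Y.1) ^ 2 else 0)), swD]

/-- The Poincaré inequality of the switch graph. -/
lemma omega_poincare (hsum : ∑ j, dm j = ∑ j, dp j) {r : ℕ} (hr : ∀ j, dm j ≤ r ∧ dp j ≤ r)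
    (hr2 : 2 ≤ r) (hm : 16 * (r * r) ≤ Fintype.card (OP dp)) (f : Set (Fin n × Fin n) → ℝ) :
    ∑ X : OmegaType dm dp, ∑ Y : OmegaType dm dp, (f X.1 - f Y.1) ^ 2 ≤
      27 * (n * n + 1) * (Fintype.card (OP dp) : ℝ) ^ 7 *
        Fintype.card (OmegaType dm dp) * swD dm dp f := by
  have h := pairing_poincare hsum hr hr2 hm f
  have e1 : ∀ φ : OP dp ≃ OP dm, ∑ φ' : OP dp ≃ OP dm with Simple φ',
      (f (arcs φ) - f (arcs φ')) ^ 2 =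
      fib dm dp * ∑ Y : OmegaType dm dp, (f (arcs φ) - f Y.1) ^ 2 := fun φ =>
    sum_simple (fun A => (f (arcs φ) - f A) ^ 2)
  have e2 : ∑ φ : OP dp ≃ OP dm with Simple φ, ∑ φ' : OP dp ≃ OP dm with Simple φ',
      (f (arcs φ) - f (arcs φ')) ^ 2 = (fib dm dp : ℝ) ^ 2 *
        ∑ X : OmegaType dm dp, ∑ Y : OmegaType dm dp, (f X.1 - f Y.1) ^ 2 := by
    rw [Finset.sum_congr rfl fun φ _ => e1 φ, ← Finset.mul_sum,
      sum_simple (fun A => ∑ Y : OmegaType dm dp, (f A - f Y.1) ^ 2)]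
    ring
  have e3 : ((Finset.univ.filter fun φ : OP dp ≃ OP dm => Simple φ).card : ℝ) =
      fib dm dp * Fintype.card (OmegaType dm dp) := by
    have := sum_simple (dm := dm) (dp := dp) (fun _ => 1)
    simpa using this
  rw [e2, e3] at h
  have hf : (0 : ℝ) < (fib dm dp : ℝ) ^ 2 := by
    have := fib_pos (dm := dm) (dp := dp)
    positivity
  refine le_of_mul_le_mul_left (h.trans ((mul_le_mul_of_nonneg_left (sum_locD_le f)
    (by positivity)).trans (le_of_eq ?_))) hf
  ring

end Fibres

/-! ### Mixing from a spectral gap -/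

section Spectral

variable {Ω : Type*} [Fintype Ω]

lemma symm_dirichlet {P : Matrix Ω Ω ℝ} (hsym : ∀ x y, P x y = P y x)
    (hrow : ∀ x, ∑ y, P x y = 1) (g : Ω → ℝ) (s : ℝ) (hs : s ^ 2 = 1) :
    ∑ x, ∑ y, P x y * (g x + s * g y) ^ 2 =
      2 * (∑ x, g x ^ 2 + s * ∑ x, g x * ∑ y, P x y * g y) := by
  have h1 : ∑ x, ∑ y, P x y * g x ^ 2 = ∑ x, g x ^ 2 := by
    refine Finset.sum_congr rfl fun x _ => ?_
    rw [← Finset.sum_mul, hrow, one_mul]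
  have h2 : ∑ x, ∑ y, P x y * g y ^ 2 = ∑ x, g x ^ 2 := by
    rw [Finset.sum_comm, ← h1]
    exact Finset.sum_congr rfl fun x _ => Finset.sum_congr rfl fun y _ => by rw [hsym]
  have h3 : ∑ x, ∑ y, P x y * (g x + s * g y) ^ 2 =
      ∑ x, ∑ y, P x y * g x ^ 2 + s ^ 2 * ∑ x, ∑ y, P x y * g y ^ 2 +
        2 * s * ∑ x, g x * ∑ y, P x y * g y := by
    simp only [Finset.mul_sum, ← Finset.sum_add_distrib]
    exact Finset.sum_congr rfl fun x _ => Finset.sum_congr rfl fun y _ => by ring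
  rw [h3, h1, h2, hs]
  ring

/-- If the quadratic form of a symmetric stochastic matrix is at most `c` in absolute value on the
mean-zero unit sphere, then the matrix contracts mean-zero vectors by `c`; this is polarisation
applied to `c g ± P g`. -/
lemma contract {P : Matrix Ω Ω ℝ} (hsym : ∀ x y, P x y = P y x) (hrow : ∀ x, ∑ y, P x y = 1)
    {c : ℝ} (hc : 0 < c)
    (hq : ∀ g : Ω → ℝ, ∑ x, g x = 0 → |∑ x, g x * ∑ y, P x y * g y| ≤ c * ∑ x, g x ^ 2)
    {g : Ω → ℝ} (hg : ∑ x, g x = 0) :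
    (∑ x, ∑ y, P x y * g y) = 0 ∧ ∑ x, (∑ y, P x y * g y) ^ 2 ≤ c ^ 2 * ∑ x, g x ^ 2 := by
  set h : Ω → ℝ := fun x => ∑ y, P x y * g y with hh
  have h0 : ∑ x, h x = 0 := by
    rw [hh, Finset.sum_comm, ← hg]
    refine Finset.sum_congr rfl fun y _ => ?_
    rw [← Finset.sum_mul, Finset.sum_congr rfl fun x _ => hsym x y, hrow, one_mul]
  refine ⟨h0, ?_⟩
  have a1 := hq (fun x => c * g x + h x) (by
    rw [Finset.sum_add_distrib, ← Finset.mul_sum, hg, h0]; ring)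
  have a2 := hq (fun x => c * g x - h x) (by
    rw [Finset.sum_sub_distrib, ← Finset.mul_sum, hg, h0]; ring)
  set k : Ω → ℝ := fun x => ∑ y, P x y * h y with hk
  have e1 : ∀ x, ∑ y, P x y * (c * g y + h y) = c * h x + k x := fun x => by
    simp only [hh, hk, Finset.mul_sum (a := c), ← Finset.sum_add_distrib]
    exact Finset.sum_congr rfl fun y _ => by ring
  have e2 : ∀ x, ∑ y, P x y * (c * g y - h y) = c * h x - k x := fun x => by
    simp only [hh, hk, Finset.mul_sum (a := c), ← Finset.sum_sub_distrib]
    exact Finset.sum_congr rfl fun y _ => by ring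
  have e3 : ∑ x, g x * k x = ∑ x, h x ^ 2 := by
    have : ∀ x, g x * k x = ∑ y, g x * (P x y * h y) := fun x => by rw [hk, Finset.mul_sum]
    rw [Finset.sum_congr rfl fun x _ => this x, Finset.sum_comm]
    refine Finset.sum_congr rfl fun y _ => ?_
    rw [sq]
    nth_rewrite 2 [hh]
    rw [Finset.mul_sum]
    exact Finset.sum_congr rfl fun x _ => by rw [hsym x y]; ring
  simp only [e1] at a1
  simp only [e2] at a2
  have f1 : ∑ x, (c * g x + h x) * (c * h x + k x) - ∑ x, (c * g x - h x) * (c * h x - k x) =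
      4 * c * ∑ x, h x ^ 2 := by
    have : ∑ x, (c * g x + h x) * (c * h x + k x) - ∑ x, (c * g x - h x) * (c * h x - k x) =
        2 * c * ∑ x, h x ^ 2 + 2 * c * ∑ x, g x * k x := by
      simp only [Finset.mul_sum, ← Finset.sum_add_distrib, ← Finset.sum_sub_distrib]
      exact Finset.sum_congr rfl fun x _ => by ring
    rw [this, e3]
    ring
  have f2 : ∑ x, (c * g x + h x) ^ 2 + ∑ x, (c * g x - h x) ^ 2 =
      2 * (c ^ 2 * ∑ x, g x ^ 2 + ∑ x, h x ^ 2) := by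
    simp only [Finset.mul_sum, ← Finset.sum_add_distrib]
    exact Finset.sum_congr rfl fun x _ => by ring
  have b1 := (abs_le.1 a1).2
  have b2 := (abs_le.1 a2).1
  have b3 : 4 * c * ∑ x, h x ^ 2 ≤ c * (2 * (c ^ 2 * ∑ x, g x ^ 2 + ∑ x, h x ^ 2)) := by
    rw [← f1, ← f2]; linarith
  have b4 : 4 * ∑ x, h x ^ 2 ≤ 2 * (c ^ 2 * ∑ x, g x ^ 2 + ∑ x, h x ^ 2) :=
    le_of_mul_le_mul_left (by linarith) hc
  linarith

/-- A symmetric chain with spectral gap at least `1 / B` and holding probability at least `1 / (2 * B)`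
on at most `exp (2 * M)` states mixes within `B (M + log (1/ε))` steps. -/
lemma mixing_le {P : Matrix Ω Ω ℝ} (hsym : ∀ x y, P x y = P y x)
    (hrow : ∀ x, ∑ y, P x y = 1) (hnn : ∀ x y, 0 ≤ P x y) {B : ℝ} (hB : 2 ≤ B)
    (hgap : ∀ g : Ω → ℝ, ∑ x, g x = 0 →
      ∑ x, g x ^ 2 ≤ B * (∑ x, g x ^ 2 - ∑ x, g x * ∑ y, P x y * g y))
    (hdiag : ∀ x, 1 ≤ 2 * B * P x x) {M : ℝ} (hM : 0 ≤ M)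
    (hN : (Fintype.card Ω : ℝ) ≤ Real.exp (2 * M)) {ε : ℝ} (hε0 : 0 < ε) (hε1 : ε < 1) :
    (mixingTime P (fun _ => (Fintype.card Ω : ℝ)⁻¹) ε : ℝ) ≤ B * (M + Real.log ε⁻¹) := by
  have hB0 : 0 < B := by linarith
  set c : ℝ := 1 - 1 / B with hcdef
  have hBc : B * c = B - 1 := by rw [hcdef]; field_simp
  have hc0 : 0 < c := by
    by_contra hneg
    nlinarith
  have hq : ∀ g : Ω → ℝ, ∑ x, g x = 0 →
      |∑ x, g x * ∑ y, P x y * g y| ≤ c * ∑ x, g x ^ 2 := by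
    intro g hg
    have h1 := hgap g hg
    have h2 := symm_dirichlet hsym hrow g 1 (by norm_num)
    have h3 : ∑ x, 4 * (P x x * g x ^ 2) ≤ ∑ x, ∑ y, P x y * (g x + 1 * g y) ^ 2 := by
      refine Finset.sum_le_sum fun x _ => ?_
      refine le_trans (le_of_eq ?_) (Finset.single_le_sum
        (f := fun y => P x y * (g x + 1 * g y) ^ 2)
        (fun y _ => mul_nonneg (hnn x y) (sq_nonneg _)) (Finset.mem_univ x))
      ring
    have h4 : ∑ x, 2 * g x ^ 2 ≤ B * ∑ x, 4 * (P x x * g x ^ 2) := by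
      rw [Finset.mul_sum]
      refine Finset.sum_le_sum fun x _ => ?_
      nlinarith [mul_le_mul_of_nonneg_right (hdiag x) (sq_nonneg (g x))]
    rw [← Finset.mul_sum] at h4
    have h5 := mul_le_mul_of_nonneg_left h3 hB0.le
    rw [h2, one_mul] at h5
    set S := ∑ x, g x ^ 2
    set Q := ∑ x, g x * ∑ y, P x y * g y
    rw [abs_le]
    constructor
    · refine le_of_mul_le_mul_left (a := B) ?_ hB0
      have : B * -(c * S) = -((B * c) * S) := by ring
      rw [this, hBc]
      linarith
    · refine le_of_mul_le_mul_left (a := B) ?_ hB0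
      have : B * (c * S) = (B * c) * S := by ring
      rw [this, hBc]
      linarith
  have hL : 0 ≤ Real.log ε⁻¹ := Real.log_nonneg ((one_le_inv₀ hε0).2 hε1.le)
  set T : ℕ := ⌊B * (M + Real.log ε⁻¹)⌋₊ with hT
  have hTle : (T : ℝ) ≤ B * (M + Real.log ε⁻¹) := Nat.floor_le (by positivity)
  have key : mixingTime P (fun _ => (Fintype.card Ω : ℝ)⁻¹) ε ≤ T := by
    refine Finset.sup_le fun x _ => Nat.sInf_le ?_
    intro t ht
    have hNpos : (0 : ℝ) < Fintype.card Ω := by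
      exact_mod_cast Fintype.card_pos_iff.2 ⟨x⟩
    set N : ℝ := (Fintype.card Ω : ℝ)
    have iter : ∀ s : ℕ, ∑ y, ((P ^ s) x y - N⁻¹) = 0 ∧
        ∑ y, ((P ^ s) x y - N⁻¹) ^ 2 ≤ (c ^ 2) ^ s := by
      intro s
      induction s with
      | zero =>
        have e1 : ∑ y, ((P ^ 0) x y - N⁻¹) = 0 := by
          rw [Finset.sum_sub_distrib]
          simp [Matrix.one_apply, N]
          rw [mul_inv_cancel₀ hNpos.ne']
          ring
        refine ⟨e1, ?_⟩
        have : ∑ y, ((P ^ 0) x y - N⁻¹) ^ 2 = ∑ y, ((P ^ 0) x y * (1 - N⁻¹)) -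
            N⁻¹ * ∑ y, ((P ^ 0) x y - N⁻¹) := by
          rw [Finset.mul_sum, ← Finset.sum_sub_distrib]
          refine Finset.sum_congr rfl fun y _ => ?_
          have : (P ^ 0) x y = 0 ∨ (P ^ 0) x y = 1 := by
            by_cases h : x = y <;> simp [h]
          rcases this with h | h <;> rw [h] <;> ring
        rw [this, e1, ← Finset.sum_mul]
        simp [Matrix.one_apply]
        positivity
      | succ s ih =>
        have e : ∀ y, (P ^ (s + 1)) x y - N⁻¹ = ∑ z, P y z * ((P ^ s) x z - N⁻¹) := by
          intro y
          rw [pow_succ, Matrix.mul_apply]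
          simp only [mul_sub, Finset.sum_sub_distrib]
          rw [← Finset.sum_mul, hrow, one_mul]
          congr 1
          exact Finset.sum_congr rfl fun z _ => by rw [hsym y z]; ring
        simp only [e]
        have := contract hsym hrow hc0 hq ih.1
        refine ⟨this.1, this.2.trans ?_⟩
        rw [pow_succ (c ^ 2), mul_comm]
        exact mul_le_mul_of_nonneg_right ih.2 (sq_nonneg _)
    have h1 : (∑ y, |(P ^ t) x y - N⁻¹|) ^ 2 ≤ N * (c ^ 2) ^ t := by
      have := sq_sum_le_card_mul_sum_sq (s := (Finset.univ : Finset Ω))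
        (f := fun y => |(P ^ t) x y - N⁻¹|)
      refine this.trans ?_
      simp only [sq_abs, Finset.card_univ]
      exact mul_le_mul_of_nonneg_left (iter t).2 hNpos.le
    have h2 : c ≤ Real.exp (-(1 / B)) := by
      have := Real.add_one_le_exp (-(1 / B))
      rw [hcdef]; linarith
    have h3 : (c ^ 2) ^ t ≤ Real.exp (-(2 * t / B)) := by
      rw [← pow_mul]
      refine (pow_le_pow_left₀ hc0.le h2 _).trans (le_of_eq ?_)
      rw [← Real.exp_nat_mul]
      congr 1
      push_cast
      ring
    have h4 : B * (M + Real.log ε⁻¹) ≤ t + 1 := by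
      have a : B * (M + Real.log ε⁻¹) < T + 1 := Nat.lt_floor_add_one _
      have b : (T : ℝ) ≤ t := by exact_mod_cast ht
      linarith
    have h5 : N * (c ^ 2) ^ t ≤ (2 * ε) ^ 2 := by
      calc N * (c ^ 2) ^ t ≤ Real.exp (2 * M) * Real.exp (-(2 * t / B)) := by gcongr
        _ = Real.exp (2 * M - 2 * t / B) := by rw [← Real.exp_add]; ring_nf
        _ ≤ Real.exp (1 + 2 * Real.log ε) := by
            apply Real.exp_le_exp.2
            rw [Real.log_inv] at h4
            have e : 2 * M - 2 * t / B = 2 * (B * M - t) / B := by field_simp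
            rw [e, div_le_iff₀ hB0]
            nlinarith
        _ = Real.exp 1 * ε ^ 2 := by
            rw [Real.exp_add, two_mul, Real.exp_add, Real.exp_log hε0]; ring
        _ ≤ _ := by nlinarith [Real.exp_one_lt_d9, sq_nonneg ε]
    have h6 : ∑ y, |(P ^ t) x y - N⁻¹| ≤ 2 * ε :=
      le_of_sq_le_sq (h1.trans h5) (by positivity)
    rw [dTV]
    linarith
  exact le_trans (by exact_mod_cast key) hTle

end Spectral

/-! ### The directed switch chain -/

section Chain

variable {dm dp : Fin n → ℕ}

lemma exists_simple {A : Set (Fin n × Fin n)} (hA : A ∈ Omega dm dp) :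
    ∃ φ : OP dp ≃ OP dm, Simple φ ∧ arcs φ = A := by
  have h : 0 < (Finset.univ.filter fun φ : OP dp ≃ OP dm => Simple φ ∧ arcs φ = A).card := by
    rw [card_fib hA]; exact fib_pos
  obtain ⟨φ, hφ⟩ := Finset.card_pos.1 h
  exact ⟨φ, (Finset.mem_filter.1 hφ).2⟩

lemma ncard_Omega {A : Set (Fin n × Fin n)} (hA : A ∈ Omega dm dp) :
    A.ncard = Fintype.card (OP dp) := by
  obtain ⟨φ, hφ, rfl⟩ := exists_simple hA
  rw [arcs, ← Set.image_univ, Set.ncard_image_of_injective _ hφ.2, Set.ncard_univ,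
    Nat.card_eq_fintype_card]

lemma arcPairCount_eq (A : Set (Fin n × Fin n)) : arcPairCount A = A.ncard.choose 2 := by
  have : {S : Set (Fin n × Fin n) | S ⊆ A ∧ S.ncard = 2} =
      (fun s : Finset (Fin n × Fin n) => (s : Set (Fin n × Fin n))) ''
        (A.toFinset.powersetCard 2 : Finset (Finset (Fin n × Fin n))) := by
    ext S
    simp only [Set.mem_ofPred_eq, Set.mem_image, Finset.mem_coe, Finset.mem_powersetCard]
    constructor
    · rintro ⟨h1, h2⟩
      refine ⟨S.toFinset, ⟨?_, ?_⟩, by simp⟩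
      · simpa using h1
      · rw [← h2, Set.ncard_eq_toFinset_card']
    · rintro ⟨s, ⟨h1, h2⟩, rfl⟩
      refine ⟨?_, ?_⟩
      · intro e he
        simpa using h1 he
      · rw [Set.ncard_coe_finset, h2]
  rw [arcPairCount, this, Set.ncard_image_of_injective _ Finset.coe_injective,
    Set.ncard_coe_finset, Finset.card_powersetCard, Set.ncard_eq_toFinset_card']

/-- The arcs removed by a switch are the difference of the two digraphs. -/
lemma diff_switch {A S : Set (Fin n × Fin n)} {x y : Fin n × Fin n} (hS : S ⊆ A) (hx : x ∉ A)
    (hy : y ∉ A) : A \ ((A \ S) ∪ {x, y}) = S := by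
  ext e
  simp only [Set.mem_sdiff, Set.mem_union, Set.mem_insert_iff, Set.mem_singleton_iff]
  constructor
  · tauto
  · intro he
    refine ⟨hS he, ?_⟩
    rintro (h | rfl | rfl)
    · exact h.2 he
    · exact hx (hS he)
    · exact hy (hS he)

lemma dSwitchCount_eq (A A' : Set (Fin n × Fin n)) :
    dSwitchCount A A' = if DSwitch A A' then 1 else 0 := by
  rw [dSwitchCount]
  split_ifs with h
  · obtain ⟨i, j, k, l, h1, h2, h3, h4, h5, h6, m1, m2, m3, m4, rfl⟩ := h
    rw [Set.ncard_eq_one]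
    refine ⟨{(i, j), (k, l)}, ?_⟩
    have hS : ({(i, j), (k, l)} : Set (Fin n × Fin n)) ⊆ A := by
      rintro e (rfl | rfl) <;> assumption
    ext S
    simp only [Set.mem_ofPred_eq, Set.mem_singleton_iff]
    constructor
    · rintro ⟨i', j', k', l', -, -, -, -, -, -, rfl, n1, n2, n3, n4, he⟩
      rw [← diff_switch hS m3 m4, he, diff_switch _ n3 n4]
      rintro e (rfl | rfl) <;> assumption
    · rintro rfl
      exact ⟨i, j, k, l, h1, h2, h3, h4, h5, h6, rfl, m1, m2, m3, m4, rfl⟩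
  · rw [Set.ncard_eq_zero]
    ext S
    simp only [Set.mem_ofPred_eq, Set.mem_empty_iff_false, iff_false]
    rintro ⟨i, j, k, l, h1, h2, h3, h4, h5, h6, rfl, m1, m2, m3, m4, he⟩
    exact h ⟨i, j, k, l, h1, h2, h3, h4, h5, h6, m1, m2, m3, m4, he⟩

lemma DSwitch.symm {A A' : Set (Fin n × Fin n)} (h : DSwitch A A') : DSwitch A' A := by
  obtain ⟨i, j, k, l, h1, h2, h3, h4, h5, h6, m1, m2, m3, m4, rfl⟩ := h
  refine ⟨i, l, k, j, h3, h2, h1, h6.symm, h5.symm, h4.symm, by simp, by simp, ?_, ?_, ?_⟩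
  · simp [h5]
    exact fun h => absurd h h2
  · simp [h5.symm]
    exact fun h => absurd h.symm h2
  · ext e
    simp only [Set.mem_sdiff, Set.mem_union, Set.mem_insert_iff, Set.mem_singleton_iff]
    have e1 : e = (i, j) → e ∈ A := fun h => h ▸ m1
    have e2 : e = (k, l) → e ∈ A := fun h => h ▸ m2
    have e3 : e = (i, l) → e ∉ A := fun h => h ▸ m3
    have e4 : e = (k, j) → e ∉ A := fun h => h ▸ m4
    tauto

lemma not_dSwitch_self (A : Set (Fin n × Fin n)) : ¬ DSwitch A A := by
  rintro ⟨i, j, k, l, -, -, -, -, -, -, -, -, m3, -, he⟩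
  apply m3
  rw [he]
  simp

/-- The number of switches available at a digraph is less than the number of pairs of arcs: two
arcs `(u, v)`, `(v, w)` are never switched. -/
lemma card_switch_lt (hrmin : ∀ j, 1 ≤ dm j ∧ 1 ≤ dp j) {A : Set (Fin n × Fin n)} (hn : 0 < n)
    (hA : A ∈ Omega dm dp) :
    (Finset.univ.filter fun B : OmegaType dm dp => DSwitch A B.1).card + 1 ≤ arcPairCount A := by
  have hout : ∀ u, ∃ w, (u, w) ∈ A := by
    intro u
    have : 0 < {w | (u, w) ∈ A}.ncard := by
      rw [hA.2.1 u]; exact (hrmin u).2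
    exact (Set.ncard_pos).1 this
  obtain ⟨v, hv⟩ := hout ⟨0, hn⟩
  obtain ⟨w, hw⟩ := hout v
  set u : Fin n := ⟨0, hn⟩
  set S0 : Set (Fin n × Fin n) := {(u, v), (v, w)} with hS0
  have huv : u ≠ v := hA.1 _ hv
  set F := Finset.univ.filter fun B : OmegaType dm dp => DSwitch A B.1
  have hinj : Set.InjOn (fun B : OmegaType dm dp => A \ B.1) F := by
    intro B hB B' hB' he
    simp only [F, Finset.coe_filter, Finset.mem_univ, true_and, Set.mem_ofPred_eq] at hB hB'
    simp only at he
    obtain ⟨i, j, k, l, -, hik, -, -, -, -, m1, m2, m3, m4, e⟩ := hB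
    obtain ⟨i', j', k', l', -, hik', -, -, -, -, n1, n2, n3, n4, e'⟩ := hB'
    apply Subtype.ext
    rw [e, diff_switch (by rintro x (rfl | rfl) <;> assumption) m3 m4, e',
      diff_switch (by rintro x (rfl | rfl) <;> assumption) n3 n4] at he
    rw [e, e', he]
    congr 1
    rw [Set.pair_eq_pair_iff] at he
    rcases he with ⟨h1, h2⟩ | ⟨h1, h2⟩
    · obtain ⟨rfl, rfl⟩ := Prod.mk.inj h1
      obtain ⟨rfl, rfl⟩ := Prod.mk.inj h2
      rfl
    · obtain ⟨rfl, rfl⟩ := Prod.mk.inj h1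
      obtain ⟨rfl, rfl⟩ := Prod.mk.inj h2
      exact Set.pair_comm _ _
  have hnot : S0 ∉ (fun B : OmegaType dm dp => A \ B.1) '' F := by
    rintro ⟨B, hB, he⟩
    simp only [F, Finset.coe_filter, Finset.mem_univ, true_and, Set.mem_ofPred_eq] at hB
    obtain ⟨i, j, k, l, h1, h2, h3, h4, h5, h6, m1, m2, m3, m4, e⟩ := hB
    simp only at he
    rw [e, diff_switch (by rintro x (rfl | rfl) <;> assumption) m3 m4, hS0,
      Set.pair_eq_pair_iff] at he
    simp only [Prod.mk.injEq] at he
    rcases he with ⟨⟨-, a⟩, b, -⟩ | ⟨⟨a, -⟩, -, b⟩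
    · exact h4 (a.trans b.symm)
    · exact h3 (a.trans b.symm)
  have hsub : insert S0 ((fun B : OmegaType dm dp => A \ B.1) '' F) ⊆
      {S : Set (Fin n × Fin n) | S ⊆ A ∧ S.ncard = 2} := by
    rintro S (rfl | ⟨B, hB, rfl⟩)
    · refine ⟨by rintro x (rfl | rfl) <;> assumption, Set.ncard_pair ?_⟩
      intro h
      exact huv (Prod.mk.inj h).1
    · simp only [F, Finset.coe_filter, Finset.mem_univ, true_and, Set.mem_ofPred_eq] at hB
      obtain ⟨i, j, k, l, h1, h2, h3, h4, h5, h6, m1, m2, m3, m4, e⟩ := hB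
      simp only
      rw [e, diff_switch (by rintro x (rfl | rfl) <;> assumption) m3 m4]
      refine ⟨by rintro x (rfl | rfl) <;> assumption, Set.ncard_pair ?_⟩
      intro h
      exact h2 (Prod.mk.inj h).1
  have := Set.ncard_le_ncard hsub
  rw [Set.ncard_insert_of_notMem hnot, hinj.ncard_image, Set.ncard_coe_finset] at this
  exact this

lemma transP_of_ne {A A' : OmegaType dm dp} (h : A ≠ A') :
    transP dm dp A A' =
      (if DSwitch A.1 A'.1 then 1 else 0) / ((Fintype.card (OP dp)).choose 2 : ℝ) := by
  rw [transP, if_neg h, dSwitchCount_eq, arcPairCount_eq, ncard_Omega A.2]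
  push_cast
  rfl

lemma transP_symm (A A' : OmegaType dm dp) : transP dm dp A A' = transP dm dp A' A := by
  by_cases h : A = A'
  · rw [h]
  · rw [transP_of_ne h, transP_of_ne (Ne.symm h)]
    have : DSwitch A.1 A'.1 ↔ DSwitch A'.1 A.1 := ⟨DSwitch.symm, DSwitch.symm⟩
    simp only [this]

lemma transP_row (A : OmegaType dm dp) : ∑ A', transP dm dp A A' = 1 := by
  have h : ∀ B, transP dm dp A B = (if B = A then 0 else
      (dSwitchCount A.1 B.1 : ℝ) / (arcPairCount A.1)) + if B = A then (1 - ∑ B : OmegaType dm dp,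
        (if B = A then 0 else (dSwitchCount A.1 B.1 : ℝ) / (arcPairCount A.1))) else 0 := by
    intro B
    by_cases hB : B = A
    · subst hB
      simp [transP]
    · simp [transP, hB, Ne.symm hB]
  rw [Finset.sum_congr rfl fun B _ => h B, Finset.sum_add_distrib, Finset.sum_ite_eq' Finset.univ A]
  simp

lemma transP_diag (hrmin : ∀ j, 1 ≤ dm j ∧ 1 ≤ dp j) (hn : 0 < n) (A : OmegaType dm dp) :
    1 / ((Fintype.card (OP dp)).choose 2 : ℝ) ≤ transP dm dp A A := by
  have h := card_switch_lt hrmin hn A.2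
  rw [transP, if_pos rfl]
  rw [arcPairCount_eq, ncard_Omega A.2] at h ⊢
  set C := (Fintype.card (OP dp)).choose 2
  have hC : (0 : ℝ) < C := by
    have : 0 < C := by omega
    exact_mod_cast this
  have e : ∑ B : OmegaType dm dp, (if B = A then 0 else (dSwitchCount A.1 B.1 : ℝ) / C) ≤
      (Finset.univ.filter fun B : OmegaType dm dp => DSwitch A.1 B.1).card / C := by
    rw [Finset.card_filter, Nat.cast_sum, Finset.sum_div]
    refine Finset.sum_le_sum fun B _ => ?_
    rw [dSwitchCount_eq]
    split_ifs <;> simp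
  have h' : ((Finset.univ.filter fun B : OmegaType dm dp => DSwitch A.1 B.1).card : ℝ) + 1 ≤ C := by
    exact_mod_cast h
  have : ((Finset.univ.filter fun B : OmegaType dm dp => DSwitch A.1 B.1).card : ℝ) / C
      ≤ 1 - 1 / C := by
    rw [div_le_iff₀ hC, sub_mul, one_div, inv_mul_cancel₀ hC.ne']
    linarith
  linarith

lemma transP_nonneg (hrmin : ∀ j, 1 ≤ dm j ∧ 1 ≤ dp j) (hn : 0 < n) (A A' : OmegaType dm dp) :
    0 ≤ transP dm dp A A' := by
  by_cases h : A = A'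
  · subst h
    exact le_trans (by positivity) (transP_diag hrmin hn A)
  · rw [transP_of_ne h]
    split_ifs <;> positivity

lemma swD_le (hrmin : ∀ j, 1 ≤ dm j ∧ 1 ≤ dp j) (hn : 0 < n)
    (hm : 2 ≤ Fintype.card (OP dp)) (f : Set (Fin n × Fin n) → ℝ) :
    swD dm dp f ≤ 2 * ((Fintype.card (OP dp)).choose 2 : ℝ) *
      (∑ x : OmegaType dm dp, f x.1 ^ 2 -
        ∑ x : OmegaType dm dp, f x.1 * ∑ y, transP dm dp x y * f y.1) := by
  have h := symm_dirichlet (transP_symm (dm := dm) (dp := dp)) transP_row (fun x => f x.1) (-1)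
    (by norm_num)
  have hC : (0 : ℝ) < ((Fintype.card (OP dp)).choose 2 : ℝ) := by
    exact_mod_cast Nat.choose_pos hm
  have h2 : swD dm dp f ≤ ((Fintype.card (OP dp)).choose 2 : ℝ) *
      ∑ x, ∑ y, transP dm dp x y * (f x.1 + -1 * f y.1) ^ 2 := by
    rw [swD]
    simp only [Finset.mul_sum]
    refine Finset.sum_le_sum fun x _ => Finset.sum_le_sum fun y _ => ?_
    split_ifs with hs
    · have hne : x ≠ y := by
        rintro rfl
        exact not_dSwitch_self _ hs
      rw [transP_of_ne hne, if_pos hs, ← mul_assoc, mul_one_div_cancel hC.ne', one_mul]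
      apply le_of_eq
      ring
    · exact mul_nonneg hC.le (mul_nonneg (transP_nonneg hrmin hn x y) (sq_nonneg _))
  rw [h] at h2
  refine h2.trans (le_of_eq ?_)
  ring

lemma card_OmegaType_le (hn : n ≤ Fintype.card (OP dp)) :
    Fintype.card (OmegaType dm dp) ≤ Fintype.card (OP dp) ^ (2 * Fintype.card (OP dp)) := by
  choose φ hφ using fun A : OmegaType dm dp => exists_simple A.2
  have hinj : Function.Injective fun A : OmegaType dm dp => arc (φ A) := by
    intro A B h
    apply Subtype.ext
    rw [← (hφ A).2, ← (hφ B).2, arcs, arcs]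
    exact congrArg Set.range h
  refine (Fintype.card_le_of_injective _ hinj).trans ?_
  rw [Fintype.card_fun, Fintype.card_prod, Fintype.card_fin, pow_mul, sq]
  exact Nat.pow_le_pow_left (Nat.mul_le_mul hn hn) _

end Chain

/-- Theorem 2: mixing time of the directed switch chain. -/
theorem main_directed
    (dm dp : Fin n → ℕ)
    (hsum : ∑ j, dm j = ∑ j, dp j)
    (hdigraphical : (Omega dm dp).Nonempty)
    (hirr : SwitchIrreducible dm dp)
    (hrmin : ∀ j, 1 ≤ dm j ∧ 1 ≤ dp j)
    (hrmax2 : 2 ≤ rmax dm dp)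
    (hrmaxm : (rmax dm dp : ℝ) ≤ (1 / 4) * Real.sqrt (numArcs dm))
    (ε : ℝ) (hε0 : 0 < ε) (hε1 : ε < 1) :
    (mixingTime (transP dm dp) (uniformDist dm dp) ε : ℝ) ≤
      (1 / 4) * (rmax dm dp : ℝ) ^ 16 * (numArcs dm : ℝ) ^ 11 *
        ((numArcs dm : ℝ) * Real.log (numArcs dm) + Real.log ε⁻¹) := by
  set r := rmax dm dp with hrdef
  have hr : ∀ j, dm j ≤ r ∧ dp j ≤ r := fun j => by
    have : max (dm j) (dp j) ≤ r := Finset.le_sup (f := fun j => max (dm j) (dp j))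
      (Finset.mem_univ j)
    exact max_le_iff.1 this
  have hcard : Fintype.card (OP dp) = numArcs dm := by
    rw [numArcs, hsum, Fintype.card_sigma]
    simp
  set m := numArcs dm with hmdef
  have hm16 : 16 * (r * r) ≤ m := by
    have h1 : (4 * r : ℝ) ^ 2 ≤ m := by
      rw [← Real.sq_sqrt (Nat.cast_nonneg m)]
      exact pow_le_pow_left₀ (by positivity) (by linarith) 2
    have h2 : ((16 * (r * r) : ℕ) : ℝ) ≤ m := by
      push_cast
      linarith
    exact_mod_cast h2
  have hm64 : 64 ≤ m := by nlinarith
  have hnm : n ≤ m := by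
    have : ∑ j : Fin n, 1 ≤ ∑ j, dm j := Finset.sum_le_sum fun j _ => (hrmin j).1
    rw [hmdef, numArcs]
    simpa using this
  have hn : 0 < n := by
    rcases Nat.eq_zero_or_pos n with rfl | h
    · simp [numArcs] at hmdef
      omega
    · exact h
  have hmR : (64 : ℝ) ≤ m := by exact_mod_cast hm64
  have hnR : (n : ℝ) ≤ m := by exact_mod_cast hnm
  set C : ℝ := (m.choose 2 : ℝ) with hC
  have hCeq : C = m * (m - 1) / 2 := Nat.cast_choose_two ℝ m
  have hC0 : 0 < C := by rw [hCeq]; nlinarith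
  have hCle : 2 * C ≤ (m : ℝ) ^ 2 := by rw [hCeq]; nlinarith
  set B : ℝ := (1 / 4) * (r : ℝ) ^ 16 * (m : ℝ) ^ 11 with hB
  have hBge : 27 * (m : ℝ) ^ 11 ≤ B := by
    have : (2 : ℝ) ^ 16 ≤ (r : ℝ) ^ 16 := pow_le_pow_left₀ (by norm_num) (by exact_mod_cast hrmax2) _
    rw [hB]
    apply mul_le_mul_of_nonneg_right _ (by positivity)
    linarith
  have hm11 : (m : ℝ) ^ 2 ≤ (m : ℝ) ^ 11 := pow_le_pow_right₀ (by linarith) (by norm_num)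
  have hBm : (m : ℝ) ^ 2 ≤ B := by nlinarith [sq_nonneg (m : ℝ)]
  refine mixing_le transP_symm transP_row (transP_nonneg hrmin hn) (B := B) (by nlinarith) ?_ ?_
    (mul_nonneg (by positivity) (Real.log_nonneg (by linarith))) ?_ hε0 hε1
  · intro g hg
    set f : Set (Fin n × Fin n) → ℝ := fun A => if h : A ∈ Omega dm dp then g ⟨A, h⟩ else 0
    have hf : ∀ x : OmegaType dm dp, f x.1 = g x := fun x => by simp [f]
    have h1 := omega_poincare hsum hr hrmax2 (by rw [hcard]; exact hm16) f
    have h2 := swD_le hrmin hn (by rw [hcard]; omega) f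
    rw [hcard] at h1 h2
    simp only [hf] at h1 h2
    set N : ℝ := (Fintype.card (OmegaType dm dp) : ℝ) with hN
    have hNpos : 0 < N := by
      obtain ⟨A, hA⟩ := hdigraphical
      have : 0 < Fintype.card (OmegaType dm dp) := Fintype.card_pos_iff.2 ⟨⟨A, hA⟩⟩
      rw [hN]
      exact_mod_cast this
    have e1 : ∑ X, ∑ Y, (g X - g Y) ^ 2 = 2 * N * ∑ x, g x ^ 2 := by
      have : ∀ X, ∑ Y, (g X - g Y) ^ 2 = N * g X ^ 2 + ∑ x, g x ^ 2 := by
        intro X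
        simp only [sub_sq, Finset.sum_add_distrib, Finset.sum_sub_distrib, ← Finset.mul_sum, hg]
        simp [hN]
      rw [Finset.sum_congr rfl fun X _ => this X, Finset.sum_add_distrib, ← Finset.mul_sum]
      rw [Finset.sum_const, Finset.card_univ, nsmul_eq_mul, ← hN]
      ring
    rw [e1] at h1
    set S := ∑ x, g x ^ 2
    set D := S - ∑ x, g x * ∑ y, transP dm dp x y * g y
    have hS : 0 ≤ S := Finset.sum_nonneg fun x _ => sq_nonneg _
    have h3 : 2 * N * S ≤ 2 * N * (27 * (n * n + 1) * (m : ℝ) ^ 7 * C * D) := by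
      refine h1.trans ((mul_le_mul_of_nonneg_left h2 (by positivity)).trans (le_of_eq ?_))
      ring
    have h4 : S ≤ 27 * (n * n + 1) * (m : ℝ) ^ 7 * C * D :=
      le_of_mul_le_mul_left h3 (by positivity)
    have hD : 0 ≤ D := by
      by_contra hneg
      have : 27 * (n * n + 1) * (m : ℝ) ^ 7 * C * D < 0 :=
        mul_neg_of_pos_of_neg (by positivity) (not_le.1 hneg)
      linarith
    refine h4.trans (mul_le_mul_of_nonneg_right (le_trans ?_ hBge) hD)
    have h5 : (n * n + 1 : ℝ) ≤ 2 * (m : ℝ) ^ 2 := by nlinarith [(Nat.cast_nonneg n : (0:ℝ) ≤ n)]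
    calc 27 * (n * n + 1) * (m : ℝ) ^ 7 * C ≤ 27 * (2 * (m : ℝ) ^ 2) * (m : ℝ) ^ 7 * C := by gcongr
      _ = 27 * (m : ℝ) ^ 9 * (2 * C) := by ring
      _ ≤ 27 * (m : ℝ) ^ 9 * (m : ℝ) ^ 2 := by gcongr
      _ = 27 * (m : ℝ) ^ 11 := by ring
  · intro x
    have h := transP_diag hrmin hn x
    rw [hcard, div_le_iff₀ hC0] at h
    have hp := transP_nonneg hrmin hn x x
    nlinarith
  · have h := card_OmegaType_le (dm := dm) (dp := dp) (by rw [hcard]; exact hnm)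
    rw [hcard] at h
    have h' : (Fintype.card (OmegaType dm dp) : ℝ) ≤ (m : ℝ) ^ (2 * m) := by exact_mod_cast h
    refine h'.trans (le_of_eq ?_)
    have : (2 * (m * Real.log m) : ℝ) = ((2 * m : ℕ) : ℝ) * Real.log m := by push_cast; ring
    rw [this, Real.exp_nat_mul, Real.exp_log (by linarith)]

end DirectedSwitchChain
end
end

section
/- Let L be an encoding for the degree sequence d with exactly p 2-defect edges and exactly q (−1)-defect edges, and let a_1, b_1 ∈ [n] be distinct vertices with L(a_1, b_1) ≠ 0. Then the number of ordered pairs of vertices (a_2, b_2) such that L(a_2, b_2) = 1, L(a_2, b_1) = 0 and a_1, b_1, a_2, b_2 are all distinct is at least M − 4p + 2q − ( d_max·( d_max − ζ_{b_1} + 2·η_{b_1} + 2 ) + η_{a_1} + η_{b_1} − 2·(ζ_{a_1} + ζ_{b_1}) + Σ_{y ∈ N̂_L(b_1)} (η_y − 2·ζ_y) ). -/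
/-!
Let `o_v` be the number of edges labelled `1` at `v`. The row sum condition reads
`d_v = o_v + 2 ζ_v - η_v`, so by the handshake lemma the number of ordered pairs `(a₂, b₂)` with
`L(a₂, b₂) = 1` is `∑ o_v = M - 4p + 2q`. Such a pair fails the remaining conditions only if
`a₂ ∈ N̂(b₁)`, `a₂ = b₁` or `b₂ = a₁`; indeed `a₂ = a₁` and `b₂ = b₁` both force `a₂ ∈ N̂(b₁)`.
Hence at most `∑_{y ∈ N̂(b₁)} o_y + o_{b₁} + o_{a₁}` pairs are lost. Substituting
`o_v = d_v - 2 ζ_v + η_v ≤ d_max - 2 ζ_v + η_v` and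
`|N̂(b₁)| = o_{b₁} + ζ_{b₁} + η_{b₁} = d_{b₁} - ζ_{b₁} + 2 η_{b₁}` gives the bound.
-/


open scoped Classical

noncomputable section

namespace SwitchChain

variable {n : ℕ}

/-- `M d` is the sum of the degrees. -/
def M (d : Fin n → ℕ) : ℕ := ∑ j, d j

/-- The maximum degree. -/
def dmax (d : Fin n → ℕ) : ℕ := Finset.univ.sup d

/-- An encoding for the degree sequence `d`: a symmetric integer matrix with zero
diagonal, entries in `{-1, 0, 1, 2}`, and row sums `d`. -/
def IsEncoding (d : Fin n → ℕ) (L : Matrix (Fin n) (Fin n) ℤ) : Prop :=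
  (∀ i j, L i j = L j i) ∧ (∀ i, L i i = 0) ∧
  (∀ i j, L i j = -1 ∨ L i j = 0 ∨ L i j = 1 ∨ L i j = 2) ∧
  (∀ i, ∑ j, L i j = (d i : ℤ))

/-- The set of (unordered) edges of `L` carrying the label `c`. -/
def labelEdges (L : Matrix (Fin n) (Fin n) ℤ) (c : ℤ) : Set (Sym2 (Fin n)) :=
  {e | ∃ x y : Fin n, e = s(x, y) ∧ x ≠ y ∧ L x y = c}

/-- `N̂_L(v)`: all neighbours of `v` (along edges with nonzero label). -/
def nbrHat (L : Matrix (Fin n) (Fin n) ℤ) (v : Fin n) : Set (Fin n) :=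
  {w | w ≠ v ∧ L v w ≠ 0}

/-- `ζ_v`: the number of 2-defect edges incident with `v`. -/
def zeta (L : Matrix (Fin n) (Fin n) ℤ) (v : Fin n) : ℕ :=
  {w | w ≠ v ∧ L v w = 2}.ncard

/-- `η_v`: the number of (−1)-defect edges incident with `v`. -/
def eta (L : Matrix (Fin n) (Fin n) ℤ) (v : Fin n) : ℕ :=
  {w | w ≠ v ∧ L v w = -1}.ncard

/-- The number of entries equal to `c` in row `v`, as an integer. For `c ≠ 0` and `L` with zero
diagonal this is the number of edges labelled `c` at `v`. -/
def rowCount (L : Matrix (Fin n) (Fin n) ℤ) (c : ℤ) (v : Fin n) : ℤ :=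
  ∑ w, if L v w = c then 1 else 0

lemma ncard_row_eq_rowCount {L : Matrix (Fin n) (Fin n) ℤ} (hdiag : ∀ i, L i i = 0)
    {c : ℤ} (hc : c ≠ 0) (v : Fin n) :
    (({w | w ≠ v ∧ L v w = c}.ncard : ℕ) : ℤ) = rowCount L c v := by
  have h : {w | w ≠ v ∧ L v w = c} = ((Finset.univ.filter fun w => L v w = c : Finset (Fin n)) :
      Set (Fin n)) := by
    ext w
    simp only [Set.mem_ofPred_eq, Finset.coe_filter, Finset.mem_univ, true_and]
    refine ⟨fun h => h.2, fun h => ⟨?_, h⟩⟩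
    rintro rfl
    exact hc (h.symm.trans (hdiag w))
  rw [h, Set.ncard_coe_finset, rowCount, Finset.sum_boole]

/-- Handshake lemma for the graph formed by the edges labelled `c`. -/
lemma sum_rowCount {L : Matrix (Fin n) (Fin n) ℤ} (hsymm : ∀ i j, L i j = L j i)
    (hdiag : ∀ i, L i i = 0) {c : ℤ} (hc : c ≠ 0) :
    ∑ v, rowCount L c v = 2 * ((labelEdges L c).ncard : ℤ) := by
  let G : SimpleGraph (Fin n) :=
    { Adj := fun x y => x ≠ y ∧ L x y = c
      symm := ⟨fun x y h => ⟨h.1.symm, (hsymm y x).trans h.2⟩⟩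
      loopless := ⟨fun x h => h.1 rfl⟩ }
  have hE : labelEdges L c = (G.edgeFinset : Set (Sym2 (Fin n))) := by
    ext e
    induction e using Sym2.ind with
    | _ x y =>
      rw [SimpleGraph.coe_edgeFinset, SimpleGraph.mem_edgeSet]
      constructor
      · rintro ⟨u, v, he, huv, h⟩
        rcases Sym2.eq_iff.1 he with ⟨rfl, rfl⟩ | ⟨rfl, rfl⟩
        · exact ⟨huv, h⟩
        · exact ⟨huv.symm, (hsymm _ _).trans h⟩
      · exact fun h => ⟨x, y, rfl, h.1, h.2⟩
  have hdeg : ∀ v, rowCount L c v = (G.degree v : ℤ) := by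
    intro v
    rw [← ncard_row_eq_rowCount hdiag hc v, ← SimpleGraph.card_neighborFinset_eq_degree,
      ← Set.ncard_coe_finset]
    congr 2
    ext w
    simp only [Set.mem_ofPred_eq, SimpleGraph.coe_neighborFinset, SimpleGraph.mem_neighborSet]
    exact ⟨fun h => ⟨h.1.symm, h.2⟩, fun h => ⟨h.1.symm, h.2⟩⟩
  rw [hE, Set.ncard_coe_finset, Finset.sum_congr rfl fun v _ => hdeg v]
  exact_mod_cast G.sum_degrees_eq_twice_card_edges

/-- The row sum condition, sorted by label. -/
lemma rowCount_one {d : Fin n → ℕ} {L : Matrix (Fin n) (Fin n) ℤ} (hL : IsEncoding d L)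
    (v : Fin n) : rowCount L 1 v = d v - 2 * zeta L v + eta L v := by
  obtain ⟨-, hdiag, hval, hsum⟩ := hL
  rw [zeta, eta, ncard_row_eq_rowCount hdiag (by norm_num),
    ncard_row_eq_rowCount hdiag (by norm_num), ← hsum v]
  simp only [rowCount, Finset.mul_sum, ← Finset.sum_sub_distrib, ← Finset.sum_add_distrib]
  refine Finset.sum_congr rfl fun w _ => ?_
  rcases hval v w with h | h | h | h <;> simp [h]

lemma card_nbrHat {d : Fin n → ℕ} {L : Matrix (Fin n) (Fin n) ℤ} (hL : IsEncoding d L)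
    (v : Fin n) :
    ((Finset.univ.filter (· ∈ nbrHat L v)).card : ℤ) = d v - zeta L v + 2 * eta L v := by
  have h1 := rowCount_one hL v
  obtain ⟨-, hdiag, hval, -⟩ := hL
  have h2 : ((Finset.univ.filter (· ∈ nbrHat L v)).card : ℤ)
      = rowCount L 1 v + rowCount L 2 v + rowCount L (-1) v := by
    rw [← Finset.sum_boole]
    simp only [rowCount, ← Finset.sum_add_distrib]
    refine Finset.sum_congr rfl fun w _ => ?_
    have hw : w ∈ nbrHat L v ↔ L v w ≠ 0 := by
      refine ⟨fun h => h.2, fun h => ⟨?_, h⟩⟩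
      rintro rfl
      exact h (hdiag w)
    simp only [hw]
    rcases hval v w with h | h | h | h <;> simp [h]
  rw [h2, h1, zeta, eta, ncard_row_eq_rowCount hdiag (by norm_num),
    ncard_row_eq_rowCount hdiag (by norm_num)]
  ring

/-- Every ordered pair labelled `1` is admissible, or starts in `N̂(b1)`, or starts at `b1`, or
ends at `a1`. -/
lemma sum_rowCount_one_le {L : Matrix (Fin n) (Fin n) ℤ} (hsymm : ∀ i j, L i j = L j i)
    (hdiag : ∀ i, L i i = 0) (a1 b1 : Fin n) (hL1 : L a1 b1 ≠ 0) :
    ∑ v, rowCount L 1 v ≤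
      ({ab : Fin n × Fin n |
          L ab.1 ab.2 = 1 ∧ L ab.1 b1 = 0 ∧
          ab.1 ≠ a1 ∧ ab.1 ≠ b1 ∧ ab.2 ≠ a1 ∧ ab.2 ≠ b1 ∧ ab.1 ≠ ab.2}.ncard : ℤ)
        + ∑ y ∈ Finset.univ.filter (· ∈ nbrHat L b1), rowCount L 1 y
        + rowCount L 1 b1 + rowCount L 1 a1 := by
  have hgood : ({ab : Fin n × Fin n |
          L ab.1 ab.2 = 1 ∧ L ab.1 b1 = 0 ∧
          ab.1 ≠ a1 ∧ ab.1 ≠ b1 ∧ ab.2 ≠ a1 ∧ ab.2 ≠ b1 ∧ ab.1 ≠ ab.2}.ncard : ℤ)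
      = ∑ a, ∑ b, if (L a b = 1 ∧ L a b1 = 0 ∧ a ≠ a1 ∧ a ≠ b1 ∧ b ≠ a1 ∧ b ≠ b1 ∧ a ≠ b)
          then (1 : ℤ) else 0 := by
    rw [← Fintype.sum_prod_type' (f := fun a b => if (L a b = 1 ∧ L a b1 = 0 ∧ a ≠ a1 ∧ a ≠ b1 ∧
      b ≠ a1 ∧ b ≠ b1 ∧ a ≠ b) then (1 : ℤ) else 0), Finset.sum_boole, ← Set.ncard_coe_finset]
    simp
  have hnb : ∑ y ∈ Finset.univ.filter (· ∈ nbrHat L b1), rowCount L 1 y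
      = ∑ a, ∑ b, if (a ∈ nbrHat L b1 ∧ L a b = 1) then (1 : ℤ) else 0 := by
    rw [Finset.sum_filter]
    refine Finset.sum_congr rfl fun a _ => ?_
    by_cases h : a ∈ nbrHat L b1 <;> simp [h, rowCount]
  have hb : rowCount L 1 b1 = ∑ a, ∑ b, if (a = b1 ∧ L a b = 1) then (1 : ℤ) else 0 := by
    rw [Finset.sum_eq_single b1]
    · simp [rowCount]
    · intro a _ h
      simp [h]
    · simp
  have ha : rowCount L 1 a1 = ∑ a, ∑ b, if (b = a1 ∧ L a b = 1) then (1 : ℤ) else 0 := by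
    rw [Finset.sum_comm, Finset.sum_eq_single a1]
    · simp [rowCount, hsymm a1]
    · intro a _ h
      simp [h]
    · simp
  rw [hgood, hnb, hb, ha]
  simp only [rowCount, ← Finset.sum_add_distrib]
  refine Finset.sum_le_sum fun a _ => Finset.sum_le_sum fun b _ => ?_
  by_cases h : L a b = 1
  · have hab : a ≠ b := by
      rintro rfl
      simp [hdiag] at h
    have hmem : a ∈ nbrHat L b1 ↔ a ≠ b1 ∧ L a b1 ≠ 0 := by
      rw [hsymm a b1]
      rfl
    have hind : ∀ (P : Prop) [Decidable P], (0 : ℤ) ≤ if P then 1 else 0 := fun P _ => by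
      split_ifs <;> norm_num
    have hg := hind (L a b = 1 ∧ L a b1 = 0 ∧ a ≠ a1 ∧ a ≠ b1 ∧ b ≠ a1 ∧ b ≠ b1 ∧ a ≠ b)
    have hn := hind (a ∈ nbrHat L b1 ∧ L a b = 1)
    have hs := hind (a = b1 ∧ L a b = 1)
    have ht := hind (b = a1 ∧ L a b = 1)
    rw [if_pos h]
    by_cases h1 : a ∈ nbrHat L b1
    · rw [if_pos (⟨h1, h⟩ : a ∈ nbrHat L b1 ∧ L a b = 1)]
      linarith
    by_cases h2 : a = b1
    · rw [if_pos (⟨h2, h⟩ : a = b1 ∧ L a b = 1)]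
      linarith
    by_cases h3 : b = a1
    · rw [if_pos (⟨h3, h⟩ : b = a1 ∧ L a b = 1)]
      linarith
    have h4 : L a b1 = 0 := by
      by_contra h4
      exact h1 (hmem.2 ⟨h2, h4⟩)
    have h5 : a ≠ a1 := by
      rintro rfl
      exact hL1 h4
    have h6 : b ≠ b1 := by
      rintro rfl
      omega
    rw [if_pos (⟨h, h4, h5, h2, h3, h6, hab⟩ :
      L a b = 1 ∧ L a b1 = 0 ∧ a ≠ a1 ∧ a ≠ b1 ∧ b ≠ a1 ∧ b ≠ b1 ∧ a ≠ b)]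
    linarith
  · simp [h]

/-- Lower bound on the number of ordered pairs `(a₂, b₂)` with `L(a₂,b₂) = 1`,
`L(a₂,b₁) = 0` and `a₁, b₁, a₂, b₂` all distinct. -/
theorem choose_second_edge_lower_bound
    (d : Fin n → ℕ) (L : Matrix (Fin n) (Fin n) ℤ) (hL : IsEncoding d L)
    (p q : ℕ)
    (hp : (labelEdges L 2).ncard = p)
    (hq : (labelEdges L (-1)).ncard = q)
    (a1 b1 : Fin n) (hne : a1 ≠ b1) (hL1 : L a1 b1 ≠ 0) :
    (M d : ℤ) - 4 * p + 2 * q -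
        ((dmax d : ℤ) * ((dmax d : ℤ) - zeta L b1 + 2 * eta L b1 + 2)
          + eta L a1 + eta L b1 - 2 * ((zeta L a1 : ℤ) + zeta L b1)
          + ∑ y ∈ Finset.univ.filter (· ∈ nbrHat L b1),
              ((eta L y : ℤ) - 2 * zeta L y)) ≤
      ({ab : Fin n × Fin n |
          L ab.1 ab.2 = 1 ∧ L ab.1 b1 = 0 ∧
          ab.1 ≠ a1 ∧ ab.1 ≠ b1 ∧ ab.2 ≠ a1 ∧ ab.2 ≠ b1 ∧ ab.1 ≠ ab.2}.ncard : ℤ) := by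
  have hle : ∀ v, (d v : ℤ) ≤ dmax d := fun v => by
    exact_mod_cast Finset.le_sup (f := d) (Finset.mem_univ v)
  have hrow := rowCount_one hL
  have hcard := card_nbrHat hL b1
  obtain ⟨hsymm, hdiag, -, -⟩ := hL
  have hz : ∑ v, (zeta L v : ℤ) = 2 * p := by
    rw [← hp, ← sum_rowCount hsymm hdiag (by norm_num)]
    exact Finset.sum_congr rfl fun v _ => ncard_row_eq_rowCount hdiag (by norm_num) v
  have he : ∑ v, (eta L v : ℤ) = 2 * q := by
    rw [← hq, ← sum_rowCount hsymm hdiag (by norm_num)]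
    exact Finset.sum_congr rfl fun v _ => ncard_row_eq_rowCount hdiag (by norm_num) v
  have htotal : ∑ v, rowCount L 1 v = (M d : ℤ) - 4 * p + 2 * q := by
    simp only [hrow, Finset.sum_add_distrib, Finset.sum_sub_distrib, ← Finset.mul_sum, hz, he, M]
    push_cast
    ring
  have hmain := sum_rowCount_one_le hsymm hdiag a1 b1 hL1
  have hnb : ∑ y ∈ Finset.univ.filter (· ∈ nbrHat L b1), rowCount L 1 y
      ≤ (dmax d : ℤ) * ((dmax d : ℤ) - zeta L b1 + 2 * eta L b1)
        + ∑ y ∈ Finset.univ.filter (· ∈ nbrHat L b1), ((eta L y : ℤ) - 2 * zeta L y) := by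
    calc ∑ y ∈ Finset.univ.filter (· ∈ nbrHat L b1), rowCount L 1 y
        ≤ ∑ y ∈ Finset.univ.filter (· ∈ nbrHat L b1),
            ((dmax d : ℤ) + ((eta L y : ℤ) - 2 * zeta L y)) :=
          Finset.sum_le_sum fun y _ => by linarith [hrow y, hle y]
      _ = (dmax d : ℤ) * ((d b1 : ℤ) - zeta L b1 + 2 * eta L b1)
            + ∑ y ∈ Finset.univ.filter (· ∈ nbrHat L b1), ((eta L y : ℤ) - 2 * zeta L y) := by
          rw [Finset.sum_add_distrib, Finset.sum_const, nsmul_eq_mul, hcard, mul_comm]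
      _ ≤ _ := by
          have := hle b1
          gcongr
  rw [htotal] at hmain
  linarith [hrow a1, hrow b1, hle a1, hle b1]

end SwitchChain
end
end
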